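/- arXiv:2605.00996 — 4 statements merged into one kernel-verified Lean document; each statement's English description precedes it below -/
import Mathlib

section
/- Let m ≥ 2, c ≥ 1, and d ≥ 0 be fixed integers. There exist a constant K = K(m,c,d) and s0 = s0(m,c,d) such that for all s ≥ s0, with n = ms + c and ℓ = s − c: if F ⊆ 2^{[n]} is a family with deletion number d(F) ≤ d, then y_F(m) ≥ ((m+1)c − d + 1)·C(n, m−1) − K·s^{m−2}. -/
/-! Put `n = ms + c`, `D = (m + 1) c - d`, and call an `m`-subset of `[n]` missing if it is not in
`F`. If `D < 0` the left-hand side is nonpositive. Otherwise fix a set `X` of at most `d` vertices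
whose deletion destroys all `ℓ`-matchings, where `mℓ + d + D = n`, and let `B₀` be the set of
vertices outside `X` that lie in at most `L n ^ (m - 2)` members of the `m`-th layer of `F`, for a
suitable constant `L`.

If `|B₀| ≥ D + 1`, then almost all `m`-sets meeting a fixed `(D + 1)`-subset of `B₀` are missing,
which is the asserted bound (`le_card_missing`).

If `|B₀| ≤ D`, at least `mℓ` vertices remain outside `X ∪ B₀`. Unless the bound holds trivially,
double counting (`sum_missDeg_le`) shows that only boundedly many vertices have missing degree
at least `n ^ (m - 1) / E`, for a large constant `E`. Each of these that is outside `X ∪ B₀` lies in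
more than `L n ^ (m - 2)` members of `F`, whereas only `O(n ^ (m - 2))` sets through it meet a given
bounded set, so all of them can be covered greedily by disjoint members of `F`
(`exists_cover`). On the remaining vertices all missing degrees are small, and a maximum matching
there is as large as the number of vertices allows: if `m` vertices were uncovered, it could be
enlarged by exchanging `m - 1` of its edges for `m` new ones (`exists_larger_matching`,
`exists_matching_of_missDeg`). Together this is an `ℓ`-matching avoiding `X`, a contradiction
(`missing_bound`). -/

open Finset

/-- The ground set `[n] = {1, …, n}`. -/
def ground (n : ℕ) : Finset ℕ := Finset.Icc 1 n

/-- `F` contains a matching of size `s`: `s` pairwise disjoint member sets. -/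
def HasMatching (F : Finset (Finset ℕ)) (s : ℕ) : Prop :=
  ∃ M ⊆ F, M.card = s ∧ (M : Set (Finset ℕ)).PairwiseDisjoint id

/-- `A = (a₁ < … < a_k)` can be shifted to `B = (b₁ < … < b_k)`: same size and `bᵢ ≤ aᵢ`. -/
def CanShiftTo (A B : Finset ℕ) : Prop :=
  ∃ h : B.card = A.card, ∀ i : Fin A.card,
    B.orderEmbOfFin h i ≤ A.orderEmbOfFin (rfl : A.card = A.card) i

/-- A family of subsets of the positive integers is shifted. -/
def IsShifted (F : Finset (Finset ℕ)) : Prop :=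
  ∀ A ∈ F, ∀ B : Finset ℕ, 0 ∉ B → CanShiftTo A B → B ∈ F

/-- `Q(m,s,ℓ) = {P ⊆ [ms+c] : |P| + |P ∩ [ms−c−1]| ≥ 2m}` where `ℓ = s − c`. -/
def Qfam (m s c : ℕ) : Finset (Finset ℕ) :=
  (ground (m * s + c)).powerset.filter
    (fun P => 2 * m ≤ P.card + (P ∩ ground (m * s - c - 1)).card)

/-- `W(m,s,ℓ) = {P ⊆ [ms+c] : |P ∩ [ms−1]| ≥ m}`. -/
def Wfam (m s c : ℕ) : Finset (Finset ℕ) :=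
  (ground (m * s + c)).powerset.filter
    (fun P => m ≤ (P ∩ ground (m * s - 1)).card)

/-- `P(m,s,ℓ) = {P ⊆ [ms+c] : |P| + |P ∩ [ℓ−1]| ≥ m+1}` where `ℓ = s − c`. -/
def Pfam (m s c : ℕ) : Finset (Finset ℕ) :=
  (ground (m * s + c)).powerset.filter
    (fun P => m + 1 ≤ P.card + (P ∩ ground (s - c - 1)).card)

/-- `P'(m,s,ℓ) = ⋃_{i=m+1}^n ([n] choose i) ∪ ([mℓ−1] choose m)` where `ℓ = s − c`. -/
def P'fam (m s c : ℕ) : Finset (Finset ℕ) :=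
  (ground (m * s + c)).powerset.filter
    (fun P => m + 1 ≤ P.card ∨ (P.card = m ∧ P ⊆ ground (m * (s - c) - 1)))

/-- The deletion number `d(F)`: the least size of a set `X ⊆ [n]` whose removal kills
all `ℓ`-matchings in the `m`-th layer of `F`. -/
noncomputable def delNum (n m ℓ : ℕ) (F : Finset (Finset ℕ)) : ℕ :=
  sInf {d : ℕ | ∃ X ⊆ ground n, X.card = d ∧
    ¬ HasMatching (F.filter (fun A => A.card = m ∧ A ⊆ ground n \ X)) ℓ}

/-- `y_F(i)`: the number of `i`-element subsets of `[n]` not in `F`. -/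
def yF (n : ℕ) (F : Finset (Finset ℕ)) (i : ℕ) : ℕ :=
  (((ground n).powerset.filter (fun A => A.card = i)) \ F).card

/-! ### Degrees and missing degrees -/

/-- The number of `m`-subsets of `W` through `v` that are missing from `H`. -/
def missDeg (W : Finset ℕ) (H : Finset (Finset ℕ)) (m v : ℕ) : ℕ :=
  ((powersetCard m W).filter (fun A => v ∈ A ∧ A ∉ H)).card

/-- The number of `m`-subsets of `W` through `v` that belong to `H`. -/
def hitDeg (W : Finset ℕ) (H : Finset (Finset ℕ)) (m v : ℕ) : ℕ :=
  ((powersetCard m W).filter (fun A => v ∈ A ∧ A ∈ H)).card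

lemma card_through_meeting_le (W S : Finset ℕ) (k v : ℕ) (hv : v ∉ S) :
    ((powersetCard (k + 2) W).filter (fun A => v ∈ A ∧ ¬ Disjoint A S)).card
      ≤ S.card * W.card ^ k := by
  have hsub : (powersetCard (k + 2) W).filter (fun A => v ∈ A ∧ ¬ Disjoint A S) ⊆
      S.biUnion (fun u => (powersetCard k W).image (fun B => insert v (insert u B))) := by
    intro A hA
    simp only [mem_filter, mem_powersetCard, not_disjoint_iff] at hA
    obtain ⟨⟨hAW, hAc⟩, hvA, u, huA, huS⟩ := hA
    have huv : u ≠ v := fun h => hv (h ▸ huS)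
    simp only [mem_biUnion, mem_image, mem_powersetCard]
    refine ⟨u, huS, (A.erase v).erase u, ⟨?_, ?_⟩, ?_⟩
    · exact ((erase_subset _ _).trans (erase_subset _ _)).trans hAW
    · rw [card_erase_of_mem (mem_erase.2 ⟨huv, huA⟩), card_erase_of_mem hvA]; omega
    · rw [insert_erase (mem_erase.2 ⟨huv, huA⟩), insert_erase hvA]
  refine (card_le_card hsub).trans (card_biUnion_le_card_mul _ _ _ fun u _ => ?_)
  refine card_image_le.trans ?_
  rw [card_powersetCard]
  exact Nat.choose_le_pow _ _

lemma choose_le_missDeg_add_hitDeg (W : Finset ℕ) (H : Finset (Finset ℕ)) (k v : ℕ)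
    (hv : v ∈ W) :
    (W.card - 1).choose (k + 1) ≤ missDeg W H (k + 2) v + hitDeg W H (k + 2) v := by
  have h1 : ((powersetCard (k + 1) (W.erase v)).image (insert v)).card
      = (W.card - 1).choose (k + 1) := by
    rw [card_image_of_injOn, card_powersetCard, card_erase_of_mem hv]
    intro A hA B hB hAB
    rw [mem_coe, mem_powersetCard] at hA hB
    have hA' : v ∉ A := fun h => (mem_erase.1 (hA.1 h)).1 rfl
    have hB' : v ∉ B := fun h => (mem_erase.1 (hB.1 h)).1 rfl
    rw [← erase_insert hA', ← erase_insert hB']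
    exact congrArg (fun s => s.erase v) hAB
  rw [← h1, missDeg, hitDeg]
  refine le_trans (card_le_card ?_) (card_union_le _ _)
  intro A hA
  simp only [mem_image, mem_powersetCard] at hA
  obtain ⟨B, ⟨hBW, hBc⟩, rfl⟩ := hA
  have hB' : v ∉ B := fun h => (mem_erase.1 (hBW h)).1 rfl
  have : insert v B ⊆ W := insert_subset hv (hBW.trans (erase_subset _ _))
  simp only [mem_union, mem_filter, mem_powersetCard, card_insert_of_notMem hB', hBc, this,
    mem_insert_self, true_and, and_true]
  tauto

/-- Double counting of incidences between a vertex set and the missing sets. -/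
lemma sum_missDeg_le (W B : Finset ℕ) (H : Finset (Finset ℕ)) (m : ℕ) :
    ∑ v ∈ B, missDeg W H m v ≤ m * (powersetCard m W \ H).card := by
  have h : ∀ v, missDeg W H m v = ∑ A ∈ powersetCard m W \ H, if v ∈ A then 1 else 0 := by
    intro v
    rw [missDeg, ← card_filter]
    congr 1
    ext A
    simp only [mem_filter, mem_sdiff]
    tauto
  simp only [h]
  rw [sum_comm, mul_comm, ← smul_eq_mul]
  refine sum_le_card_nsmul _ _ _ fun A hA => ?_
  rw [← card_filter]
  rw [mem_sdiff, mem_powersetCard] at hA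
  rw [← hA.1.2]
  exact card_le_card fun x hx => (mem_filter.1 hx).2

/-! ### Building matchings -/

/-- Greedy covering: if every vertex of `B` lies in an `m`-set of `H` avoiding any prescribed set
of at most `L` other vertices, where `L ≥ |Z| + m|B|`, then `B` is covered by a small matching avoiding `Z`. -/
lemma exists_cover (H : Finset (Finset ℕ)) (m L : ℕ) (Z B : Finset ℕ)
    (hL : Z.card + m * B.card ≤ L) (hZ : Disjoint B Z)
    (hB : ∀ b ∈ B, ∀ S : Finset ℕ, S.card ≤ L → b ∉ S →
      ∃ A ∈ H, A.card = m ∧ b ∈ A ∧ Disjoint A S) :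
    ∃ M ⊆ H, (M : Set (Finset ℕ)).PairwiseDisjoint id ∧ M.card ≤ B.card ∧
      (∀ A ∈ M, A.card = m ∧ Disjoint A Z) ∧ B ⊆ M.biUnion id := by
  induction B using Finset.induction_on with
  | empty => exact ⟨∅, by simp, by simp, by simp, by simp, by simp⟩
  | insert b B hb ih =>
    rw [card_insert_of_notMem hb] at hL ⊢
    rw [disjoint_insert_left] at hZ
    obtain ⟨M, hMH, hMd, hMc, hM, hcov⟩ := ih (by nlinarith) hZ.2
      (fun b' hb' => hB b' (mem_insert_of_mem hb'))
    by_cases hbM : b ∈ M.biUnion id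
    · exact ⟨M, hMH, hMd, by omega, hM, insert_subset hbM hcov⟩
    have hUc : (M.biUnion id).card ≤ M.card * m :=
      card_biUnion_le_card_mul _ _ _ fun A hA => (hM A hA).1.le
    have hS : (Z ∪ M.biUnion id).card ≤ L := by
      have := card_union_le Z (M.biUnion id)
      nlinarith
    obtain ⟨A, hAH, hAc, hbA, hAS⟩ := hB b (mem_insert_self _ _) _ hS (by
      rw [mem_union]; tauto)
    rw [disjoint_union_right, disjoint_biUnion_right] at hAS
    refine ⟨insert A M, insert_subset hAH hMH, ?_, ?_, ?_, ?_⟩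
    · rw [coe_insert]
      exact hMd.insert fun A' hA' _ => hAS.2 A' hA'
    · exact (card_insert_le _ _).trans (by omega)
    · intro A' hA'
      rcases mem_insert.1 hA' with rfl | h
      · exact ⟨hAc, hAS.1⟩
      · exact hM A' h
    · rw [biUnion_insert]
      exact insert_subset (mem_union_left _ hbA) (hcov.trans subset_union_right)

/-- Local augmentation. Label the vertices of each edge of `M` by `Fin m`. For a set `S` of `m - 1`
edges of `M`, the `m` sets consisting of `u i` and the `i`-th vertices of the edges in `S` are
disjoint and cover `S` and all `u i`. When all missing degrees at the `u i` are small, some `S`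
makes all these sets members of `H`, and replacing `S` by them enlarges the matching. -/
lemma exists_larger_matching (W : Finset ℕ) (H M : Finset (Finset ℕ)) (k D : ℕ)
    (hMH : M ⊆ H) (hMd : (M : Set (Finset ℕ)).PairwiseDisjoint id)
    (hM : ∀ A ∈ M, A.card = k + 2 ∧ A ⊆ W)
    (u : Fin (k + 2) → ℕ) (hu : Function.Injective u) (huW : ∀ i, u i ∈ W)
    (huM : ∀ i, ∀ A ∈ M, u i ∉ A)
    (hD : ∀ i, missDeg W H (k + 2) (u i) ≤ D)
    (hlt : (k + 2) * D < M.card.choose (k + 1)) :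
    ∃ M' ⊆ H, (M' : Set (Finset ℕ)).PairwiseDisjoint id ∧ M'.card = M.card + 1 ∧
      ∀ A ∈ M', A.card = k + 2 ∧ A ⊆ M.biUnion id ∪ univ.image u := by
  have hlab : ∀ A : Finset ℕ, ∃ f : Fin (k + 2) → ℕ, A ∈ M →
      Function.Injective f ∧ ∀ i, f i ∈ A := by
    intro A
    by_cases hA : A ∈ M
    · exact ⟨A.orderEmbOfFin (hM A hA).1, fun _ => ⟨(A.orderEmbOfFin _).injective,
        fun i => A.orderEmbOfFin_mem _ i⟩⟩
    · exact ⟨fun _ => 0, fun h => absurd h hA⟩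
  choose lab hlab using hlab
  have hlabdisj : ∀ A ∈ M, ∀ B ∈ M, ∀ i j, lab A i = lab B j → A = B ∧ i = j := by
    intro A hA B hB i j h
    have hAB : A = B := by
      by_contra hne
      exact disjoint_left.1 (hMd hA hB hne) ((hlab A hA).2 i) (h ▸ (hlab B hB).2 j)
    subst hAB
    exact ⟨rfl, (hlab A hA).1 h⟩
  set e : Fin (k + 2) → Finset (Finset ℕ) → Finset ℕ :=
    fun i S => insert (u i) (S.image fun A => lab A i) with he
  have huim : ∀ i j, ∀ S ⊆ M, u i ∉ S.image fun A => lab A j := by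
    intro i j S hS h
    obtain ⟨A, hA, hAi⟩ := mem_image.1 h
    exact huM i A (hS hA) (hAi ▸ (hlab A (hS hA)).2 j)
  have hinj : ∀ i, ∀ S ⊆ M, Set.InjOn (fun A => lab A i) (S : Set (Finset ℕ)) :=
    fun i S hS A hA B hB h => (hlabdisj A (hS hA) B (hS hB) i i h).1
  have hecard : ∀ i, ∀ S ⊆ M, S.card = k + 1 → (e i S).card = k + 2 := by
    intro i S hS hSc
    rw [he]
    dsimp only
    rw [card_insert_of_notMem (huim i i S hS), card_image_of_injOn (hinj i S hS), hSc]
  have hesub : ∀ i, ∀ S ⊆ M, e i S ⊆ S.biUnion id ∪ univ.image u := by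
    intro i S hS
    refine insert_subset (mem_union_right _ (mem_image_of_mem _ (mem_univ _))) ?_
    intro x hx
    obtain ⟨A, hA, rfl⟩ := mem_image.1 hx
    exact mem_union_left _ (mem_biUnion.2 ⟨A, hA, (hlab A (hS hA)).2 i⟩)
  have heinj : ∀ i, ∀ S ⊆ M, ∀ T ⊆ M, e i S = e i T → S ⊆ T := by
    intro i S hS T hT h A hA
    have h1 : lab A i ∈ e i T := h ▸ mem_insert_of_mem (mem_image_of_mem _ hA)
    rcases mem_insert.1 h1 with h2 | h2
    · exact absurd (h2 ▸ (hlab A (hS hA)).2 i) (huM i A (hS hA))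
    · obtain ⟨B, hB, hBA⟩ := mem_image.1 h2
      exact (hlabdisj B (hT hB) A (hS hA) i i hBA).1 ▸ hB
  -- For fixed `i` the map `S ↦ e i S` is injective, so at most `D` choices of `S` fail at `i`.
  obtain ⟨S, hS, hgood⟩ : ∃ S ∈ powersetCard (k + 1) M, ∀ i, e i S ∈ H := by
    by_contra! hcon
    have hsub : powersetCard (k + 1) M ⊆
        univ.biUnion fun i => (powersetCard (k + 1) M).filter fun S => e i S ∉ H := by
      intro S hS
      obtain ⟨i, hi⟩ := hcon S hS
      exact mem_biUnion.2 ⟨i, mem_univ _, mem_filter.2 ⟨hS, hi⟩⟩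
    have hle := (card_le_card hsub).trans (card_biUnion_le_card_mul _ _ D fun i _ => ?_)
    · rw [card_powersetCard, card_univ, Fintype.card_fin] at hle
      omega
    · refine le_trans ?_ (hD i)
      refine card_le_card_of_injOn (e i) ?_ ?_
      · intro S hS
        simp only [coe_filter, mem_powersetCard, Set.mem_ofPred_eq] at hS ⊢
        refine ⟨⟨?_, hecard i S hS.1.1 hS.1.2⟩, mem_insert_self _ _, hS.2⟩
        refine (hesub i S hS.1.1).trans (union_subset ?_ ?_)
        · exact biUnion_subset.2 fun A hA => (hM A (hS.1.1 hA)).2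
        · exact image_subset_iff.2 fun i _ => huW i
      · intro S hS T hT h
        simp only [coe_filter, mem_powersetCard, Set.mem_ofPred_eq] at hS hT
        exact (heinj i S hS.1.1 T hT.1.1 h).antisymm (heinj i T hT.1.1 S hS.1.1 h.symm)
  obtain ⟨hSM, hSc⟩ := mem_powersetCard.1 hS
  have hedisj : ∀ i j, i ≠ j → Disjoint (e i S) (e j S) := by
    intro i j hij
    rw [disjoint_left]
    intro x hxi hxj
    rcases mem_insert.1 hxi with rfl | hx1
    · rcases mem_insert.1 hxj with h2 | h2
      · exact hij (hu h2)
      · exact huim i j S hSM h2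
    · rcases mem_insert.1 hxj with rfl | h2
      · exact huim j i S hSM hx1
      · obtain ⟨A, hA, rfl⟩ := mem_image.1 hx1
        obtain ⟨B, hB, hBA⟩ := mem_image.1 h2
        exact hij (hlabdisj A (hSM hA) B (hSM hB) i j hBA.symm).2
  have heM : ∀ i, ∀ A ∈ M \ S, Disjoint (e i S) A := by
    intro i A hA
    rw [mem_sdiff] at hA
    rw [disjoint_left]
    intro x hx hxA
    rcases mem_insert.1 hx with rfl | hx1
    · exact huM i A hA.1 hxA
    · obtain ⟨B, hB, rfl⟩ := mem_image.1 hx1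
      have hne : B ≠ A := fun h => hA.2 (h ▸ hB)
      exact disjoint_left.1 (hMd (hSM hB) hA.1 hne) ((hlab B (hSM hB)).2 i) hxA
  have heinj' : Function.Injective fun i => e i S := by
    intro i j h
    by_contra hij
    have h1 := hedisj i j hij
    have h2 : u i ∈ e i S := mem_insert_self _ _
    exact disjoint_left.1 h1 h2 ((show e i S = e j S from h) ▸ h2)
  refine ⟨(M \ S) ∪ univ.image fun i => e i S, ?_, ?_, ?_, ?_⟩
  · exact union_subset (sdiff_subset.trans hMH) (image_subset_iff.2 fun i _ => hgood i)
  · intro A hA B hB hne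
    rw [mem_coe, mem_union, mem_image] at hA hB
    rcases hA with hA | ⟨i, -, rfl⟩ <;> rcases hB with hB | ⟨j, -, rfl⟩
    · exact hMd (mem_sdiff.1 hA).1 (mem_sdiff.1 hB).1 hne
    · exact (heM j A hA).symm
    · exact heM i B hB
    · exact hedisj i j fun h => hne (h ▸ rfl)
  · rw [card_union_of_disjoint, card_sdiff_of_subset hSM, card_image_of_injective _ heinj',
      card_univ, Fintype.card_fin, hSc]
    · have := card_le_card hSM
      omega
    · rw [disjoint_left]
      intro A hA hA'
      obtain ⟨i, -, rfl⟩ := mem_image.1 hA'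
      exact disjoint_left.1 (heM i _ hA) (mem_insert_self _ _) (mem_insert_self _ _)
  · intro A hA
    rw [mem_union, mem_image] at hA
    rcases hA with hA | ⟨i, -, rfl⟩
    · exact ⟨(hM A (mem_sdiff.1 hA).1).1,
        (subset_biUnion_of_mem id (mem_sdiff.1 hA).1).trans subset_union_left⟩
    · exact ⟨hecard i S hSM hSc,
        (hesub i S hSM).trans (union_subset_union_left (biUnion_subset_biUnion_of_subset_left _ hSM))⟩

lemma pow_le_mul_choose (n m a k : ℕ) (h : n ≤ 4 * m * (a + 1 - k)) :
    n ^ k ≤ (4 * m) ^ k * k.factorial * a.choose k := by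
  calc n ^ k ≤ (4 * m * (a + 1 - k)) ^ k := Nat.pow_le_pow_left h k
    _ = (4 * m) ^ k * (a + 1 - k) ^ k := mul_pow _ _ _
    _ ≤ (4 * m) ^ k * a.descFactorial k :=
        Nat.mul_le_mul_left _ (Nat.pow_sub_le_descFactorial a k)
    _ = _ := by rw [Nat.descFactorial_eq_factorial_mul_choose, mul_assoc]

/-- If all missing degrees on `V` are at most `D`, then `V` contains matchings of every size
permitted by its cardinality. In `hsmall`, which says that `D` is a small multiple of
`|W| ^ (m - 1)`, the number `a` is either the size of a maximum matching or one less than the number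
of vertices that it leaves uncovered. -/
lemma exists_matching_of_missDeg (W V : Finset ℕ) (H : Finset (Finset ℕ)) (k q D : ℕ)
    (hVW : V ⊆ W) (hq : (k + 2) * q ≤ V.card)
    (hD : ∀ v ∈ V, missDeg W H (k + 2) v ≤ D)
    (hsmall : ∀ a, W.card ≤ 4 * (k + 2) * (a + 1 - (k + 1)) → (k + 2) * D < a.choose (k + 1))
    (hV : W.card + 4 * (k + 2) * (k + 2) ≤ 2 * V.card) :
    ∃ M ⊆ H, (M : Set (Finset ℕ)).PairwiseDisjoint id ∧ M.card = q ∧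
      ∀ A ∈ M, A.card = k + 2 ∧ A ⊆ V := by
  classical
  set P : Finset (Finset (Finset ℕ)) := H.powerset.filter fun M =>
    (M : Set (Finset ℕ)).PairwiseDisjoint id ∧ ∀ A ∈ M, A.card = k + 2 ∧ A ⊆ V with hP
  have hPne : P.Nonempty := ⟨∅, by simp [hP]⟩
  obtain ⟨M, hMP, hmax⟩ := exists_max_image P card hPne
  have hM' := hMP
  simp only [hP, mem_filter, mem_powerset] at hM'
  obtain ⟨hMH, hMd, hM⟩ := hM'
  by_cases hqM : q ≤ M.card
  · obtain ⟨M', hM'M, hM'c⟩ := exists_subset_card_eq hqM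
    exact ⟨M', hM'M.trans hMH, hMd.subset (by exact_mod_cast hM'M), hM'c,
      fun A hA => hM A (hM'M hA)⟩
  exfalso
  push Not at hqM
  set U := V \ M.biUnion id with hU
  have hUM : ∀ x ∈ U, ∀ A ∈ M, x ∉ A := fun x hx A hA hxA =>
    (mem_sdiff.1 hx).2 (mem_biUnion.2 ⟨A, hA, hxA⟩)
  have hcov : (M.biUnion id).card = M.card * (k + 2) :=
    card_biUnion hMd |>.trans (sum_const_nat fun A hA => (hM A hA).1)
  have hUc : U.card + (k + 2) * M.card = V.card := by
    have h1 : M.biUnion id ⊆ V := biUnion_subset.2 fun A hA => (hM A hA).2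
    have h2 := card_sdiff_add_card_eq_card h1
    rw [hcov] at h2
    rw [hU]; linarith
  have hUlarge : k + 2 ≤ U.card := by
    have : (k + 2) * (M.card + 1) ≤ (k + 2) * q := Nat.mul_le_mul_left _ hqM
    nlinarith
  rcases le_or_gt W.card (4 * (k + 2) * (U.card - 1 + 1 - (k + 1))) with hbig | hbig
  · -- All `m`-subsets of `U` are missing by maximality, so a vertex of `U` has large missing degree.
    obtain ⟨v, hv⟩ : U.Nonempty := card_pos.1 (by omega)
    have h1 := choose_le_missDeg_add_hitDeg U H k v hv
    have h2 : hitDeg U H (k + 2) v = 0 := by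
      rw [hitDeg, card_eq_zero, filter_eq_empty_iff]
      rintro A hA ⟨hvA, hAH⟩
      rw [mem_powersetCard] at hA
      have hAM : A ∉ M := fun h => hUM v hv A h hvA
      have h3 : insert A M ∈ P := by
        simp only [hP, mem_filter, mem_powerset]
        refine ⟨insert_subset hAH hMH, ?_, ?_⟩
        · rw [coe_insert]
          refine hMd.insert fun B hB _ => ?_
          exact disjoint_left.2 fun x hx hxB => hUM x (hA.1 hx) B hB hxB
        · intro B hB
          rcases mem_insert.1 hB with rfl | hB
          · exact ⟨hA.2, hA.1.trans sdiff_subset⟩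
          · exact hM B hB
      have h4 := hmax _ h3
      rw [card_insert_of_notMem hAM] at h4
      omega
    have h3 : missDeg U H (k + 2) v ≤ missDeg W H (k + 2) v := by
      refine card_le_card (filter_subset_filter _ (powersetCard_mono ?_))
      exact sdiff_subset.trans hVW
    have h4 := hD v (mem_sdiff.1 hv).1
    have h5 := hsmall _ hbig
    nlinarith
  · have hMbig : W.card ≤ 4 * (k + 2) * (M.card + 1 - (k + 1)) := by
      have e1 : U.card - 1 + 1 - (k + 1) = U.card - (k + 1) := by omega
      rw [e1] at hbig
      obtain ⟨t, ht⟩ := Nat.exists_eq_add_of_le (show k + 1 ≤ U.card by omega)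
      rw [ht, Nat.add_sub_cancel_left] at hbig
      have ht2 : 2 * t ≤ (k + 2) * t := Nat.mul_le_mul_right _ (by omega)
      have hMk : k ≤ M.card := by
        by_contra hlt
        push Not at hlt
        have : (k + 2) * M.card ≤ (k + 2) * k := Nat.mul_le_mul_left _ hlt.le
        nlinarith
      obtain ⟨r, hr⟩ := Nat.exists_eq_add_of_le hMk
      have e2 : M.card + 1 - (k + 1) = r := by omega
      rw [e2]
      rw [hr, ht] at hUc
      nlinarith
    obtain ⟨U', hU'U, hU'c⟩ := exists_subset_card_eq hUlarge
    obtain ⟨M', hM'H, hM'd, hM'c, hM'⟩ := exists_larger_matching W H M k D hMH hMd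
      (fun A hA => ⟨(hM A hA).1, (hM A hA).2.trans hVW⟩)
      (U'.orderEmbOfFin hU'c) (U'.orderEmbOfFin hU'c).injective
      (fun i => hVW (mem_sdiff.1 (hU'U (U'.orderEmbOfFin_mem hU'c i))).1)
      (fun i => hUM _ (hU'U (U'.orderEmbOfFin_mem hU'c i)))
      (fun i => hD _ (mem_sdiff.1 (hU'U (U'.orderEmbOfFin_mem hU'c i))).1)
      (hsmall _ hMbig)
    have h3 : M' ∈ P := by
      simp only [hP, mem_filter, mem_powerset]
      refine ⟨hM'H, hM'd, fun A hA => ⟨(hM' A hA).1, (hM' A hA).2.trans (union_subset ?_ ?_)⟩⟩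
      · exact biUnion_subset.2 fun A hA => (hM A hA).2
      · exact image_subset_iff.2 fun i _ =>
          (mem_sdiff.1 (hU'U (U'.orderEmbOfFin_mem hU'c i))).1
    have := hmax _ h3
    omega

/-! ### Counting missing sets -/

/-- If all vertices of `R` lie in few members of `H`, then almost every `m`-set meeting `R` is missing:
only the missing sets that meet `R` in exactly one vertex are counted. -/
lemma le_card_missing (W R : Finset ℕ) (H : Finset (Finset ℕ)) (k L : ℕ) (hRW : R ⊆ W)
    (hR : ∀ v ∈ R, hitDeg W H (k + 2) v ≤ L * W.card ^ k) :
    R.card * W.card.choose (k + 1) ≤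
      (powersetCard (k + 2) W \ H).card + R.card * ((L + R.card + 1) * W.card ^ k) := by
  set G : ℕ → Finset (Finset ℕ) := fun v =>
    (powersetCard (k + 2) W).filter fun A => (v ∈ A ∧ A ∉ H) ∧ Disjoint A (R.erase v) with hG
  have hGc : ∀ v ∈ R, W.card.choose (k + 1) ≤ (G v).card + (L + R.card + 1) * W.card ^ k := by
    intro v hv
    have h1 := choose_le_missDeg_add_hitDeg W H k v (hRW hv)
    have h2 := hR v hv
    have h3 := card_through_meeting_le W (R.erase v) k v (by simp)
    have h4 : missDeg W H (k + 2) v ≤ (G v).card + ((powersetCard (k + 2) W).filter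
        (fun A => v ∈ A ∧ ¬ Disjoint A (R.erase v))).card := by
      refine le_trans (card_le_card ?_) (card_union_le _ _)
      intro A hA
      simp only [hG, mem_union, mem_filter] at hA ⊢
      tauto
    have h5 : (R.erase v).card * W.card ^ k ≤ R.card * W.card ^ k :=
      Nat.mul_le_mul_right _ (card_le_card (erase_subset _ _))
    have h6 : W.card.choose (k + 1) ≤ (W.card - 1).choose (k + 1) + W.card ^ k := by
      have hpos : 0 < W.card := card_pos.2 ⟨v, hRW hv⟩
      obtain ⟨w, hw⟩ := Nat.exists_eq_succ_of_ne_zero hpos.ne'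
      rw [hw, Nat.succ_sub_one, Nat.succ_eq_add_one, Nat.choose_succ_succ' w k, add_comm]
      have : w.choose k ≤ (w + 1) ^ k :=
        (Nat.choose_le_pow _ _).trans (Nat.pow_le_pow_left (by omega) _)
      omega
    nlinarith
  have hdisj : (R : Set ℕ).PairwiseDisjoint G := by
    intro v hv w hw hne
    refine disjoint_left.2 fun A hA hA' => ?_
    simp only [hG, mem_filter] at hA hA'
    exact disjoint_left.1 hA.2.2 hA'.2.1.1 (mem_erase.2 ⟨hne.symm, hw⟩)
  have hsub : R.biUnion G ⊆ powersetCard (k + 2) W \ H := by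
    refine biUnion_subset.2 fun v _ A hA => ?_
    simp only [hG, mem_filter] at hA
    exact mem_sdiff.2 ⟨hA.1, hA.2.1.2⟩
  have h1 := card_le_card hsub
  rw [card_biUnion hdisj] at h1
  have h2 := sum_le_sum hGc
  rw [sum_const, sum_add_distrib, sum_const, smul_eq_mul, smul_eq_mul] at h2
  omega

/-- The core dichotomy, for `m = k + 2` and a deleted set `X` of at most `d` vertices. Either at
least `D + 1` vertices outside `X` lie in few `m`-sets of `H`, which gives the bound, or the bound
holds trivially, or the vertices outside `X` contain a `q`-matching of `H`, which is excluded. -/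
lemma missing_bound (W X : Finset ℕ) (H : Finset (Finset ℕ)) (k d D q E T L : ℕ)
    (hX : X.card ≤ d)
    (hE : E = (k + 2) * ((4 * (k + 2)) ^ (k + 1) * (k + 1).factorial) + 1)
    (hT : T = (k + 2) * (D + 1) * E)
    (hL : L = d + D + (k + 2) * T)
    (hq : (k + 2) * q + d + D ≤ W.card)
    (hn : 4 * (k + 2) * (k + 2) + 2 * L + 1 ≤ W.card)
    (hno : ¬ ∃ M ⊆ H, (M : Set (Finset ℕ)).PairwiseDisjoint id ∧ M.card = q ∧
      ∀ A ∈ M, A.card = k + 2 ∧ A ⊆ W \ X) (hHW : H ⊆ W.powerset) :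
    (D + 1) * W.card.choose (k + 1) ≤
      (powersetCard (k + 2) W \ H).card + (D + 1) * ((L + (D + 1) + 1) * W.card ^ k) := by
  set n := W.card with hn_def
  set y := (powersetCard (k + 2) W \ H).card with hy
  rcases le_or_gt ((D + 1) * n.choose (k + 1)) y with hbig | hylt
  · omega
  set B0 := (W \ X).filter fun v => hitDeg W H (k + 2) v ≤ L * n ^ k with hB0
  rcases le_or_gt (D + 1) B0.card with hB0c | hB0c
  · obtain ⟨R, hRB, hRc⟩ := exists_subset_card_eq hB0c
    have h := le_card_missing W R H k L
      (hRB.trans ((filter_subset _ _).trans sdiff_subset))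
      (fun v hv => (mem_filter.1 (hRB hv)).2)
    rw [hRc] at h
    exact h
  exfalso
  apply hno
  set V1 := (W \ X) \ B0 with hV1
  -- The vertices of large missing degree; double counting bounds their number.
  set B := V1.filter fun v => n ^ (k + 1) ≤ E * missDeg W H (k + 2) v with hB
  have hnpos : 0 < n := by omega
  have hBc : B.card ≤ T := by
    have h1 : B.card * n ^ (k + 1) ≤ E * ∑ v ∈ B, missDeg W H (k + 2) v := by
      rw [mul_sum, ← smul_eq_mul]
      exact card_nsmul_le_sum _ _ _ fun v hv => (mem_filter.1 hv).2
    have h2 := sum_missDeg_le W B H (k + 2)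
    have h3 : y ≤ (D + 1) * n ^ (k + 1) :=
      hylt.le.trans (Nat.mul_le_mul_left _ (Nat.choose_le_pow _ _))
    have h4 : B.card * n ^ (k + 1) ≤ T * n ^ (k + 1) :=
      calc B.card * n ^ (k + 1) ≤ E * ∑ v ∈ B, missDeg W H (k + 2) v := h1
        _ ≤ E * ((k + 2) * ((D + 1) * n ^ (k + 1))) :=
            Nat.mul_le_mul_left _ (h2.trans (Nat.mul_le_mul_left _ h3))
        _ = T * n ^ (k + 1) := by rw [hT]; ring
    exact Nat.le_of_mul_le_mul_right h4 (by positivity)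
  have hV1c : n ≤ V1.card + X.card + B0.card := by
    have h1 := le_card_sdiff B0 (W \ X)
    rw [← hV1] at h1
    have h2 := le_card_sdiff X W
    omega
  obtain ⟨M0, hM0H, hM0d, hM0c, hM0, hM0cov⟩ := exists_cover H (k + 2) L (X ∪ B0) B (by
      have h1 := card_union_le X B0
      have h2 : (k + 2) * B.card ≤ (k + 2) * T := Nat.mul_le_mul_left _ hBc
      omega) (by
      refine disjoint_left.2 fun v hv hv' => ?_
      have h1 := (mem_filter.1 hv).1
      simp only [hV1, mem_sdiff] at h1
      rw [mem_union] at hv'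
      tauto) (by
      intro b hb S hS hbS
      have h1 := (mem_filter.1 hb).1
      rw [hV1, mem_sdiff] at h1
      have h2 : L * n ^ k < hitDeg W H (k + 2) b := by
        by_contra hcon
        exact h1.2 (mem_filter.2 ⟨h1.1, not_lt.1 hcon⟩)
      by_contra! hcon
      have h3 : hitDeg W H (k + 2) b ≤ _ := card_le_card
        (t := (powersetCard (k + 2) W).filter (fun A => b ∈ A ∧ ¬ Disjoint A S)) (by
          intro A hA
          rw [mem_filter, mem_powersetCard] at hA
          exact mem_filter.2 ⟨mem_powersetCard.2 hA.1, hA.2.1,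
            hcon A hA.2.2 hA.1.2 hA.2.1⟩)
      have h4 := card_through_meeting_le W S k b hbS
      rw [← hn_def] at h4
      have h5 : S.card * n ^ k ≤ L * n ^ k := Nat.mul_le_mul_right _ hS
      omega)
  have hM0W : ∀ A ∈ M0, A ⊆ V1 := by
    intro A hA x hx
    have h1 := mem_powerset.1 (hHW (hM0H hA)) hx
    have h2 := disjoint_left.1 (hM0 A hA).2 hx
    rw [mem_union] at h2
    simp only [hV1, mem_sdiff]
    tauto
  have hV1X : V1 ⊆ W \ X := sdiff_subset
  set V2 := V1 \ M0.biUnion id with hV2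
  have hcov : (M0.biUnion id).card = (k + 2) * M0.card := by
    rw [mul_comm]
    exact card_biUnion hM0d |>.trans (sum_const_nat fun A hA => (hM0 A hA).1)
  have hM0T : (k + 2) * M0.card ≤ (k + 2) * T := Nat.mul_le_mul_left _ (hM0c.trans hBc)
  have hV2c : V1.card ≤ V2.card + (k + 2) * M0.card := by
    have := le_card_sdiff (M0.biUnion id) V1
    rw [← hV2] at this
    omega
  obtain ⟨M1, hM1H, hM1d, hM1c, hM1⟩ := exists_matching_of_missDeg W V2 H k (q - M0.card)
    ((n ^ (k + 1) - 1) / E) (sdiff_subset.trans (hV1X.trans sdiff_subset))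
    (by rw [Nat.mul_sub]; omega)
    (by
      intro v hv
      rw [hV2, mem_sdiff] at hv
      have h1 : v ∉ B := fun h => hv.2 (hM0cov h)
      have h2 : E * missDeg W H (k + 2) v < n ^ (k + 1) := by
        by_contra hcon
        exact h1 (mem_filter.2 ⟨hv.1, not_lt.1 hcon⟩)
      rw [Nat.le_div_iff_mul_le (by omega), mul_comm]
      omega)
    (by
      intro a ha
      have h1 := pow_le_mul_choose n (k + 2) a (k + 1) ha
      set x := (n ^ (k + 1) - 1) / E with hx
      have h2 : E * x ≤ n ^ (k + 1) - 1 := Nat.mul_div_le _ _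
      have h3 : 0 < n ^ (k + 1) := by positivity
      set c := (4 * (k + 2)) ^ (k + 1) * (k + 1).factorial with hc
      have h4 : E * x < c * a.choose (k + 1) := by omega
      by_contra hcon
      push Not at hcon
      have h5 : c * a.choose (k + 1) ≤ c * ((k + 2) * x) := Nat.mul_le_mul_left _ hcon
      rw [hE] at h4
      nlinarith)
    (by omega)
  have hdisj : ∀ A ∈ M0, ∀ A' ∈ M1, Disjoint A A' := by
    intro A hA A' hA'
    refine disjoint_left.2 fun x hx hx' => ?_
    exact (mem_sdiff.1 ((hM1 A' hA').2 hx')).2 (mem_biUnion.2 ⟨A, hA, hx⟩)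
  have hMd : ((M0 ∪ M1 : Finset (Finset ℕ)) : Set (Finset ℕ)).PairwiseDisjoint id := by
    rw [coe_union]
    exact (Set.pairwiseDisjoint_union).2 ⟨hM0d, hM1d, fun A hA A' hA' _ => hdisj A hA A' hA'⟩
  have hMc : q ≤ (M0 ∪ M1).card := by
    rw [card_union_of_disjoint, hM1c]
    · omega
    · refine disjoint_left.2 fun A hA hA' => ?_
      have h1 := hdisj A hA A hA'
      rw [disjoint_self_iff_empty] at h1
      have h2 := (hM0 A hA).1
      rw [h1, card_empty] at h2
      omega
  obtain ⟨M, hMM, hMq⟩ := exists_subset_card_eq hMc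
  refine ⟨M, hMM.trans (union_subset hM0H hM1H), hMd.subset (by exact_mod_cast hMM), hMq, ?_⟩
  intro A hA
  rcases mem_union.1 (hMM hA) with h | h
  · exact ⟨(hM0 A h).1, (hM0W A h).trans hV1X⟩
  · exact ⟨(hM1 A h).1, (hM1 A h).2.trans (sdiff_subset.trans hV1X)⟩

/-! ### The bound -/

theorem stmt_12 (m c d : ℕ) (hm : 2 ≤ m) (hc : 1 ≤ c) :
    ∃ K s0 : ℕ, ∀ s : ℕ, s0 ≤ s →
      ∀ F : Finset (Finset ℕ), F ⊆ (ground (m * s + c)).powerset →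
        delNum (m * s + c) m (s - c) F ≤ d →
          ((m + 1) * (c : ℤ) - d + 1) * ((m * s + c).choose (m - 1) : ℤ) ≤
            (yF (m * s + c) F m : ℤ) + (K : ℤ) * (s : ℤ) ^ (m - 2) := by
  obtain ⟨k, rfl⟩ := Nat.exists_eq_add_of_le' hm
  rcases lt_or_ge ((k + 2 + 1) * c) d with hd | hd
  · refine ⟨0, 0, fun s _ F _ _ => ?_⟩
    have h1 : (((k + 2 : ℕ) : ℤ) + 1) * (c : ℤ) - d + 1 ≤ 0 := by
      have : (((k + 2 + 1) * c : ℕ) : ℤ) < d := by exact_mod_cast hd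
      push_cast at this ⊢
      linarith
    have h2 := mul_nonpos_of_nonpos_of_nonneg h1
      (Nat.cast_nonneg (α := ℤ) (((k + 2) * s + c).choose (k + 2 - 1)))
    have h3 := Nat.cast_nonneg (α := ℤ) (yF ((k + 2) * s + c) F (k + 2))
    rw [Nat.cast_zero, zero_mul, add_zero]
    exact h2.trans h3
  obtain ⟨D, hD⟩ := Nat.exists_eq_add_of_le hd
  obtain ⟨E, hE⟩ : ∃ E, E = (k + 2) * ((4 * (k + 2)) ^ (k + 1) * (k + 1).factorial) + 1 := ⟨_, rfl⟩
  obtain ⟨T, hT⟩ : ∃ T, T = (k + 2) * (D + 1) * E := ⟨_, rfl⟩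
  obtain ⟨L, hL⟩ : ∃ L, L = d + D + (k + 2) * T := ⟨_, rfl⟩
  refine ⟨(D + 1) * ((L + (D + 1) + 1) * (k + 2 + c) ^ k),
    4 * (k + 2) * (k + 2) + 2 * L + 1 + c, fun s hs F hF hdel => ?_⟩
  set n := (k + 2) * s + c with hn
  have hWc : (ground n).card = n := by simp [ground]
  have hsn : s ≤ n := by
    have : 1 * s ≤ (k + 2) * s := Nat.mul_le_mul_right _ (by omega)
    omega
  have hne : {d : ℕ | ∃ X ⊆ ground n, X.card = d ∧
      ¬ HasMatching (F.filter (fun A => A.card = k + 2 ∧ A ⊆ ground n \ X)) (s - c)}.Nonempty := by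
    refine ⟨_, ground n, Subset.rfl, rfl, ?_⟩
    rintro ⟨M, hM, hMc, -⟩
    obtain ⟨A, hA⟩ : M.Nonempty := card_pos.1 (by omega)
    have h1 := (mem_filter.1 (hM hA)).2
    rw [sdiff_self, bot_eq_empty, subset_empty] at h1
    rw [h1.2, card_empty] at h1
    omega
  obtain ⟨X, -, hXc, hXm⟩ := Nat.sInf_mem hne
  have key := missing_bound (ground n) X F k d D (s - c) E T L (hXc.trans_le hdel) hE hT hL
    (by
      rw [hWc, hn, Nat.mul_sub]
      have : (k + 2) * c ≤ (k + 2) * s := Nat.mul_le_mul_left _ (by omega)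
      have h2 : (k + 2 + 1) * c = (k + 2) * c + c := by ring
      omega)
    (by rw [hWc]; omega)
    (by
      rintro ⟨M, hMF, hMd, hMc, hM⟩
      exact hXm ⟨M, fun A hA => mem_filter.2 ⟨hMF hA, hM A hA⟩, hMc, hMd⟩) hF
  have hy : (powersetCard (k + 2) (ground n) \ F).card = yF n F (k + 2) := by
    rw [yF, powersetCard_eq_filter]
  rw [hWc, hy] at key
  have hnk : n ^ k ≤ (k + 2 + c) ^ k * s ^ k := by
    rw [← mul_pow]
    refine Nat.pow_le_pow_left ?_ k
    have : c * 1 ≤ c * s := Nat.mul_le_mul_left _ (by omega)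
    rw [hn]
    nlinarith
  have key2 : (D + 1) * n.choose (k + 1) ≤ yF n F (k + 2) +
      (D + 1) * ((L + (D + 1) + 1) * (k + 2 + c) ^ k) * s ^ k := by
    refine key.trans (Nat.add_le_add_left ?_ _)
    rw [mul_assoc, mul_assoc]
    exact Nat.mul_le_mul_left _ (Nat.mul_le_mul_left _ hnk)
  have hcoef : (((k + 2 : ℕ) : ℤ) + 1) * (c : ℤ) - d + 1 = ((D + 1 : ℕ) : ℤ) := by
    have : (((k + 2 + 1) * c : ℕ) : ℤ) = ((d + D : ℕ) : ℤ) := by exact_mod_cast hD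
    push_cast at this ⊢
    linarith
  rw [hcoef]
  simp only [Nat.add_sub_cancel, show k + 2 - 1 = k + 1 from rfl]
  exact_mod_cast key2
end

section
/- Let m ≥ 2 and c ≥ 1 be fixed integers. There exist a constant K = K(m,c) and s0 = s0(m,c) such that for all s ≥ s0, with n = ms + c and ℓ = s − c: if F ⊆ 2^{[n]} is a shifted family with ν(F) < s and deletion number d(F) > (m−1)c, then y_F(m+1) ≥ (2c−1)·C(n, m−1) − K·s^{m−2}. -/
/-!
Write `N = n - 2c` and split the top `2c` points of `[n]` into the `c` nested pairs
`{N + 1 + i, n - i}`, `i < c`.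

Suppose pairwise disjoint `(m-1)`-sets `S_i ⊆ [N]` exist such that every `S_i ∪ {N + 1 + i, n - i}`
lies in `F`. Their union `X` has `(m-1)c` points, so `d(F) > (m-1)c` gives `s - c` disjoint `m`-sets
of `F` avoiding `X`; by shiftedness they may be pushed down into `[N] \ X`, which has exactly
`m(s-c)` points (`exists_compressed_matching`). Together with the `c` sets
`S_i ∪ {N + 1 + i, n - i}` this is an `s`-matching in `F`, a contradiction.

Hence a greedy choice of the `S_i` must get stuck (`exists_stuck`): for some `i < c` and some `X`
with at most `(m-1)c` points, `S ∪ {N + 1 + i, n - i} ∉ F` for every `(m-1)`-set `S ⊆ [N] \ X`.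
By shiftedness the pair may be moved up, and a chain from `{N + 1 + i, n - i}` to `{n - 1, n}`
contains `2c - 1` pairs, with consecutive sums. So at least `(2c-1) C(n - (m+1)c, m-1)` of the
`(m+1)`-sets are missing (`missing_card`), and `C(n, m-1) - C(n - (m+1)c, m-1) = O(s^(m-2))`.
-/

open Finset

/-- A strictly increasing map that moves no point up realises a shift onto its image. -/
lemma canShiftTo_image (A : Finset ℕ) (f : ℕ → ℕ) (hf : StrictMonoOn f (A : Set ℕ))
    (hle : ∀ x ∈ A, f x ≤ x) : CanShiftTo A (A.image f) := by
  have h : (A.image f).card = A.card := Finset.card_image_of_injOn hf.injOn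
  refine ⟨h, fun i => ?_⟩
  have key : (fun i => f (A.orderEmbOfFin rfl i)) = (A.image f).orderEmbOfFin h := by
    apply Finset.orderEmbOfFin_unique
    · intro x
      exact Finset.mem_image_of_mem f (Finset.orderEmbOfFin_mem A rfl x)
    · intro x y hxy
      exact hf (Finset.orderEmbOfFin_mem A rfl x) (Finset.orderEmbOfFin_mem A rfl y)
        ((A.orderEmbOfFin rfl).strictMono hxy)
  rw [← key]
  exact hle _ (Finset.orderEmbOfFin_mem A rfl i)

lemma mem_ground {n x : ℕ} : x ∈ ground n ↔ 1 ≤ x ∧ x ≤ n := Finset.mem_Icc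

/-- A set of positive integers avoiding `X` can be pushed down, preserving order and still
avoiding `X`, into any initial segment `[N]` with enough points outside `X`. -/
lemma exists_compression (U X : Finset ℕ) (N : ℕ) (hU : ∀ x ∈ U, 1 ≤ x ∧ x ∉ X)
    (hcard : U.card ≤ (ground N \ X).card) :
    ∃ f : ℕ → ℕ, StrictMonoOn f (U : Set ℕ) ∧ (∀ x ∈ U, f x ≤ x) ∧
      ∀ x ∈ U, f x ∈ ground N \ X := by
  classical
  -- `f` sends the `k`-th point of `U` to the `k`-th positive integer outside `X`.
  let p : ℕ → Prop := fun x => 1 ≤ x ∧ x ∉ X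
  have hinf : (Set.ofPred p).Infinite := by
    refine ((insert 0 X : Finset ℕ).finite_toSet.infinite_compl).mono ?_
    intro x hx
    simp only [Set.mem_compl_iff, Finset.coe_insert, Set.mem_insert_iff, Finset.mem_coe,
      not_or] at hx
    exact ⟨Nat.one_le_iff_ne_zero.mpr hx.1, hx.2⟩
  have hlt : ∀ x ∈ U, Nat.count (· ∈ U) x < U.card := by
    intro x hx
    rw [Nat.count_eq_card_filter_range]
    apply Finset.card_lt_card
    refine ⟨fun y hy => (Finset.mem_filter.mp hy).2, fun h => ?_⟩
    have := h hx
    simp at this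
  have hW : (ground N \ X).card = Nat.count p (N + 1) := by
    rw [Nat.count_eq_card_filter_range]
    congr 1
    ext x
    simp only [Finset.mem_sdiff, mem_ground, Finset.mem_filter, Finset.mem_range, p]
    constructor
    · rintro ⟨⟨h1, h2⟩, h3⟩; exact ⟨by omega, h1, h3⟩
    · rintro ⟨h1, h2, h3⟩; exact ⟨⟨h2, by omega⟩, h3⟩
  refine ⟨fun x => Nat.nth p (Nat.count (· ∈ U) x), ?_, ?_, ?_⟩
  · intro x hx y hy hxy
    exact Nat.nth_strictMono hinf (Nat.count_strict_mono (p := (· ∈ U)) hx hxy)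
  · intro x hx
    have h1 : Nat.count (· ∈ U) x ≤ Nat.count p x :=
      Nat.count_mono_left (fun k _ hk => hU k hk)
    calc Nat.nth p (Nat.count (· ∈ U) x) ≤ Nat.nth p (Nat.count p x) :=
          (Nat.nth_strictMono hinf).monotone h1
      _ = x := Nat.nth_count (p := p) (hU x hx)
  · intro x hx
    have h1 : p (Nat.nth p (Nat.count (· ∈ U) x)) := Nat.nth_mem_of_infinite hinf _
    have h2 : Nat.nth p (Nat.count (· ∈ U) x) < N + 1 :=
      Nat.nth_lt_of_lt_count (lt_of_lt_of_le (hlt x hx) (hW ▸ hcard))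
    exact Finset.mem_sdiff.mpr ⟨mem_ground.mpr ⟨h1.1, Nat.lt_succ_iff.mp h2⟩, h1.2⟩

/-- In a shifted family, a matching of `m`-sets avoiding `X` can be pushed down into `[N] \ X`
when that set is large enough to hold it. -/
lemma exists_compressed_matching {F : Finset (Finset ℕ)} (hF : IsShifted F) {n m ℓ N : ℕ}
    {X : Finset ℕ}
    (hM : HasMatching (F.filter (fun A => A.card = m ∧ A ⊆ ground n \ X)) ℓ)
    (hN : ℓ * m ≤ (ground N \ X).card) :
    ∃ M ⊆ F, M.card = ℓ ∧ (M : Set (Finset ℕ)).PairwiseDisjoint id ∧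
      ∀ A ∈ M, A.card = m ∧ A ⊆ ground N \ X := by
  obtain ⟨M, hMF, hMc, hMd⟩ := hM
  have hmem : ∀ A ∈ M, A ∈ F ∧ A.card = m ∧ A ⊆ ground n \ X := fun A hA =>
    Finset.mem_filter.mp (hMF hA)
  have hUc : (M.biUnion id).card ≤ ℓ * m := by
    rw [← hMc]
    exact Finset.card_biUnion_le_card_mul _ _ _ (fun A hA => (hmem A hA).2.1.le)
  obtain ⟨f, hmono, hle, hmaps⟩ := exists_compression (M.biUnion id) X N
    (by
      intro x hx
      obtain ⟨A, hA, hxA⟩ := Finset.mem_biUnion.mp hx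
      have := Finset.mem_sdiff.mp ((hmem A hA).2.2 hxA)
      exact ⟨(mem_ground.mp this.1).1, this.2⟩) (hUc.trans hN)
  have hsub : ∀ A ∈ M, A ⊆ M.biUnion id := fun A hA =>
    Finset.subset_biUnion_of_mem id hA
  have hinj := hmono.injOn
  refine ⟨M.image (fun A => A.image f), ?_, ?_, ?_, ?_⟩
  · intro B hB
    obtain ⟨A, hA, rfl⟩ := Finset.mem_image.mp hB
    refine hF A (hmem A hA).1 _ ?_ (canShiftTo_image A f
      (hmono.mono (by exact_mod_cast hsub A hA)) (fun x hx => hle x (hsub A hA hx)))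
    intro h0
    obtain ⟨x, hx, hx0⟩ := Finset.mem_image.mp h0
    have := (mem_ground.mp (Finset.mem_sdiff.mp (hmaps x (hsub A hA hx))).1).1
    omega
  · rw [Finset.card_image_of_injOn, hMc]
    intro A hA B hB hAB
    have hA' := hsub A hA
    have hB' := hsub B hB
    have hAB' : f '' (A : Set ℕ) = f '' (B : Set ℕ) := by
      have := congrArg (fun Z : Finset ℕ => (Z : Set ℕ)) hAB
      simpa using this
    have := (hinj.image_eq_image_iff (by exact_mod_cast hA') (by exact_mod_cast hB')).mp hAB'
    exact_mod_cast this
  · intro B₁ hB₁ B₂ hB₂ hne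
    obtain ⟨A₁, hA₁, rfl⟩ := Finset.mem_image.mp (Finset.mem_coe.mp hB₁)
    obtain ⟨A₂, hA₂, rfl⟩ := Finset.mem_image.mp (Finset.mem_coe.mp hB₂)
    have hne' : A₁ ≠ A₂ := fun h => hne (by rw [h])
    have hd : Disjoint A₁ A₂ := hMd hA₁ hA₂ hne'
    change Disjoint (A₁.image f) (A₂.image f)
    rw [Finset.disjoint_left]
    intro y hy₁ hy₂
    obtain ⟨x₁, hx₁, rfl⟩ := Finset.mem_image.mp hy₁
    obtain ⟨x₂, hx₂, h⟩ := Finset.mem_image.mp hy₂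
    have := hinj (hsub _ hA₂ hx₂) (hsub _ hA₁ hx₁) h
    subst this
    exact Finset.disjoint_left.mp hd hx₁ hx₂
  · intro B hB
    obtain ⟨A, hA, rfl⟩ := Finset.mem_image.mp hB
    refine ⟨?_, ?_⟩
    · rw [Finset.card_image_of_injOn (hinj.mono (by exact_mod_cast hsub A hA)), (hmem A hA).2.1]
    · intro y hy
      obtain ⟨x, hx, rfl⟩ := Finset.mem_image.mp hy
      exact hmaps x (hsub A hA hx)

/-- In a shifted family, a pair on top of `S` can be lowered. -/
lemma lower_pair {F : Finset (Finset ℕ)} (hF : IsShifted F) {S : Finset ℕ} {N a b a' b' : ℕ}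
    (hS : S ⊆ ground N) (ha : N < a) (hab : a < b) (haa : a ≤ a') (hbb : b ≤ b') (hab' : a' < b')
    (h : S ∪ {a', b'} ∈ F) : S ∪ {a, b} ∈ F := by
  have hSl : ∀ x ∈ S, 1 ≤ x ∧ x ≤ N := fun x hx => mem_ground.mp (hS hx)
  let f : ℕ → ℕ := fun x => if x ≤ N then x else if x = a' then a else b
  have hfS : ∀ x ∈ S, f x = x := fun x hx => by simp [f, (hSl x hx).2]
  have hfa : f a' = a := by
    have : ¬ a' ≤ N := by omega
    simp [f, this]
  have hfb : f b' = b := by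
    have h1 : ¬ b' ≤ N := by omega
    have h2 : b' ≠ a' := by omega
    simp [f, h1, h2]
  have himg : (S ∪ {a', b'}).image f = S ∪ {a, b} := by
    rw [Finset.image_union, Finset.image_insert, Finset.image_singleton, hfa, hfb]
    congr 1
    rw [Finset.image_congr (g := id) (fun x hx => hfS x hx), Finset.image_id]
  rw [← himg]
  refine hF _ h _ ?_ (canShiftTo_image _ f ?_ ?_)
  · rw [himg]
    intro h0
    simp only [Finset.mem_union, Finset.mem_insert, Finset.mem_singleton] at h0
    rcases h0 with h0 | h0 | h0
    · have := hSl 0 h0; omega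
    · omega
    · omega
  · intro x hx y hy hxy
    simp only [Finset.coe_union, Set.mem_union, Finset.mem_coe, Finset.mem_insert,
      Finset.mem_singleton] at hx hy
    rcases hx with hx | rfl | rfl <;> rcases hy with hy | rfl | rfl
    · rw [hfS x hx, hfS y hy]; exact hxy
    · rw [hfS x hx, hfa]; have := hSl x hx; omega
    · rw [hfS x hx, hfb]; have := hSl x hx; omega
    · have := hSl y hy; omega
    · omega
    · rw [hfa, hfb]; exact hab
    · have := hSl y hy; omega
    · omega
    · omega
  · intro x hx
    simp only [Finset.mem_union, Finset.mem_insert, Finset.mem_singleton] at hx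
    rcases hx with hx | rfl | rfl
    · rw [hfS x hx]
    · rw [hfa]; exact haa
    · rw [hfb]; exact hbb

/-- Greedy choice of disjoint sets `g 0, …, g (k-1)` in `G` satisfying prescribed properties:
it succeeds because the points already used never exceed the `c * r` that `h` allows to avoid. -/
lemma exists_greedy (G : Finset ℕ) (r c : ℕ) (P : ℕ → Finset ℕ → Prop)
    (h : ∀ i < c, ∀ X ⊆ G, X.card ≤ c * r → ∃ S ⊆ G \ X, S.card = r ∧ P i S) :
    ∀ k ≤ c, ∃ g : ℕ → Finset ℕ, (∀ i < k, g i ⊆ G ∧ (g i).card = r ∧ P i (g i)) ∧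
      ∀ i < k, ∀ j < k, i ≠ j → Disjoint (g i) (g j) := by
  intro k
  induction k with
  | zero => intro _; exact ⟨fun _ => ∅, by simp, by simp⟩
  | succ k ih =>
    intro hk
    obtain ⟨g, hg, hd⟩ := ih (by omega)
    have hXc : ((Finset.range k).biUnion g).card ≤ c * r := by
      have := Finset.card_biUnion_le_card_mul (Finset.range k) g r
        (fun i hi => (hg i (Finset.mem_range.mp hi)).2.1.le)
      rw [Finset.card_range] at this
      exact this.trans (Nat.mul_le_mul_right r (by omega))
    obtain ⟨S, hS, hSc, hSP⟩ := h k (by omega) ((Finset.range k).biUnion g)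
      (Finset.biUnion_subset.mpr fun i hi => (hg i (Finset.mem_range.mp hi)).1) hXc
    have hdS : ∀ i < k, Disjoint (g i) S := by
      intro i hi
      rw [Finset.disjoint_left]
      intro x hx hxS
      exact (Finset.mem_sdiff.mp (hS hxS)).2
        (Finset.mem_biUnion.mpr ⟨i, Finset.mem_range.mpr hi, hx⟩)
    have hne : ∀ i < k, Function.update g k S i = g i := fun i hi =>
      Function.update_of_ne (by omega) _ _
    refine ⟨Function.update g k S, ?_, ?_⟩
    · intro i hi
      rcases Nat.lt_succ_iff_lt_or_eq.mp hi with hi | rfl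
      · rw [hne i hi]; exact hg i hi
      · rw [Function.update_self]
        exact ⟨hS.trans Finset.sdiff_subset, hSc, hSP⟩
    · intro i hi j hj hij
      rcases Nat.lt_succ_iff_lt_or_eq.mp hi with hi | rfl <;>
      rcases Nat.lt_succ_iff_lt_or_eq.mp hj with hj | rfl
      · rw [hne i hi, hne j hj]; exact hd i hi j hj hij
      · rw [hne i hi, Function.update_self]; exact hdS i hi
      · rw [hne j hj, Function.update_self]; exact (hdS j hj).symm
      · exact absurd rfl hij

/-- For some nested pair of top points, all its extensions by `(m-1)`-sets that avoid a bounded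
set `X` are missing from `F`. Here `N = n - 2c`, with `n = ms + c`. -/
lemma exists_stuck {m c s N : ℕ} (hm : 2 ≤ m) (hs : c ≤ s) (hN : N + 2 * c = m * s + c)
    {F : Finset (Finset ℕ)} (hF : IsShifted F) (hν : ¬ HasMatching F s)
    (hd : (m - 1) * c < delNum (m * s + c) m (s - c) F) :
    ∃ i < c, ∃ X ⊆ ground N, X.card ≤ c * (m - 1) ∧
      ∀ S ⊆ ground N \ X, S.card = m - 1 → S ∪ {N + 1 + i, N + 2 * c - i} ∉ F := by
  by_contra hcon
  push Not at hcon
  obtain ⟨g, hg, hgd⟩ := exists_greedy (ground N) (m - 1) c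
    (fun i S => S ∪ {N + 1 + i, N + 2 * c - i} ∈ F) hcon c le_rfl
  apply hν
  set X := (Finset.range c).biUnion g with hX
  have hXN : X ⊆ ground N :=
    Finset.biUnion_subset.mpr fun i hi => (hg i (Finset.mem_range.mp hi)).1
  have hXc : X.card = (m - 1) * c := by
    rw [hX, Finset.card_biUnion (fun i hi j hj hij =>
      hgd i (Finset.mem_range.mp hi) j (Finset.mem_range.mp hj) hij),
      Finset.sum_congr rfl (fun i hi => (hg i (Finset.mem_range.mp hi)).2.1)]
    simp [mul_comm]
  have hM : HasMatching (F.filter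
      (fun A => A.card = m ∧ A ⊆ ground (m * s + c) \ X)) (s - c) := by
    by_contra hno
    refine Nat.notMem_of_lt_sInf hd ⟨X, hXN.trans ?_, hXc, hno⟩
    intro x hx
    rw [mem_ground] at hx ⊢
    omega
  have hroom : (s - c) * m ≤ (ground N \ X).card := by
    rw [Finset.card_sdiff_of_subset hXN, hXc]
    obtain ⟨t, rfl⟩ := Nat.exists_eq_add_of_le hs
    obtain ⟨r, rfl⟩ := Nat.exists_eq_add_of_le hm
    have h1 : c + t - c = t := by omega
    have h2 : 2 + r - 1 = r + 1 := by omega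
    have h3 : (ground N).card = N := by simp [ground]
    rw [h1, h2, h3]
    have h4 : N = t * (2 + r) + (r + 1) * c := by nlinarith
    omega
  obtain ⟨M, hMF, hMc, hMd, hMp⟩ := exists_compressed_matching hF hM hroom
  let q : ℕ → Finset ℕ := fun i => g i ∪ {N + 1 + i, N + 2 * c - i}
  have hqcard : ∀ i < c, (q i).card = m + 1 := by
    intro i hi
    have hdis : Disjoint (g i) {N + 1 + i, N + 2 * c - i} := by
      rw [Finset.disjoint_left]
      intro x hx hx'
      have := mem_ground.mp ((hg i hi).1 hx)
      simp only [Finset.mem_insert, Finset.mem_singleton] at hx'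
      omega
    rw [Finset.card_union_of_disjoint hdis, (hg i hi).2.1, Finset.card_pair (by omega)]
    omega
  have hqd : ∀ i < c, ∀ j < c, i ≠ j → Disjoint (q i) (q j) := by
    intro i hi j hj hij
    rw [Finset.disjoint_left]
    intro x hx hx'
    simp only [q, Finset.mem_union, Finset.mem_insert, Finset.mem_singleton] at hx hx'
    rcases hx with hx | hx <;> rcases hx' with hx' | hx'
    · exact Finset.disjoint_left.mp (hgd i hi j hj hij) hx hx'
    · have := mem_ground.mp ((hg i hi).1 hx); omega
    · have := mem_ground.mp ((hg j hj).1 hx'); omega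
    · omega
  have hMq : ∀ A ∈ M, ∀ i < c, Disjoint A (q i) := by
    intro A hA i hi
    rw [Finset.disjoint_left]
    intro x hx hx'
    have h1 := Finset.mem_sdiff.mp ((hMp A hA).2 hx)
    simp only [q, Finset.mem_union, Finset.mem_insert, Finset.mem_singleton] at hx'
    rcases hx' with hx' | hx'
    · exact h1.2 (Finset.mem_biUnion.mpr ⟨i, Finset.mem_range.mpr hi, hx'⟩)
    · have := mem_ground.mp h1.1; omega
  refine ⟨M ∪ (Finset.range c).image q, ?_, ?_, ?_⟩
  · refine Finset.union_subset hMF ?_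
    intro B hB
    obtain ⟨i, hi, rfl⟩ := Finset.mem_image.mp hB
    exact (hg i (Finset.mem_range.mp hi)).2.2
  · rw [Finset.card_union_of_disjoint, hMc, Finset.card_image_of_injOn, Finset.card_range]
    · omega
    · intro i hi j hj hij
      by_contra hne
      have hi' := Finset.mem_range.mp (Finset.mem_coe.mp hi)
      have h1 := hqd i hi' j (Finset.mem_range.mp (Finset.mem_coe.mp hj)) hne
      rw [← hij, Finset.disjoint_self_iff_empty] at h1
      have h2 := hqcard i hi'
      rw [h1] at h2
      simp at h2
    · rw [Finset.disjoint_left]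
      intro A hA hA'
      obtain ⟨i, hi, rfl⟩ := Finset.mem_image.mp hA'
      have h1 := (hMp _ hA).1
      have h2 := hqcard i (Finset.mem_range.mp hi)
      omega
  · intro A hA B hB hne
    simp only [Finset.coe_union, Finset.coe_image, Set.mem_union, Finset.mem_coe, Set.mem_image,
      Finset.mem_range] at hA hB
    rcases hA with hA | ⟨i, hi, rfl⟩ <;> rcases hB with hB | ⟨j, hj, rfl⟩
    · exact hMd hA hB hne
    · exact hMq A hA j hj
    · exact (hMq B hB i hi).symm
    · exact hqd i hi j hj (fun h => hne (by rw [h]))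

/-- Moving the stuck pair up along a chain of `2c - 1` pairs gives many missing sets. -/
lemma missing_card {m c N i : ℕ} (hm : 2 ≤ m) (hi : i < c)
    {F : Finset (Finset ℕ)} (hF : IsShifted F) {X : Finset ℕ} (hX : X ⊆ ground N)
    (h : ∀ S ⊆ ground N \ X, S.card = m - 1 → S ∪ {N + 1 + i, N + 2 * c - i} ∉ F) :
    (2 * c - 1) * (N - X.card).choose (m - 1) ≤ yF (N + 2 * c) F (m + 1) := by
  -- The chain first raises the upper point to `n`, then the lower one; the `t`-th pair has sum
  -- `2N + 2c + 1 + t`.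
  let pr : ℕ → Finset ℕ := fun t => {N + 1 + max i t, N + 2 * c - i + min i t}
  let D := Finset.range (2 * c - 1) ×ˢ (ground N \ X).powersetCard (m - 1)
  have hDc : D.card = (2 * c - 1) * (N - X.card).choose (m - 1) := by
    rw [Finset.card_product, Finset.card_range, Finset.card_powersetCard,
      Finset.card_sdiff_of_subset hX]
    simp [ground]
  have hS : ∀ z ∈ D, z.1 < 2 * c - 1 ∧ z.2 ⊆ ground N \ X ∧ z.2.card = m - 1 := by
    intro z hz
    obtain ⟨h1, h2⟩ := Finset.mem_product.mp hz
    exact ⟨Finset.mem_range.mp h1, Finset.mem_powersetCard.mp h2⟩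
  have hSN : ∀ z ∈ D, ∀ x ∈ z.2, 1 ≤ x ∧ x ≤ N := fun z hz x hx =>
    mem_ground.mp (Finset.mem_sdiff.mp ((hS z hz).2.1 hx)).1
  have hdis : ∀ z ∈ D, Disjoint z.2 (pr z.1) := by
    intro z hz
    rw [Finset.disjoint_left]
    intro x hx hx'
    have := hSN z hz x hx
    simp only [pr, Finset.mem_insert, Finset.mem_singleton] at hx'
    omega
  have hpne : ∀ t < 2 * c - 1, N + 1 + max i t < N + 2 * c - i + min i t := by
    intro t ht; omega
  rw [← hDc, yF]
  refine Finset.card_le_card_of_injOn (fun z => z.2 ∪ pr z.1) ?_ ?_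
  · intro z hz
    have hz := Finset.mem_coe.mp hz
    have ht := (hS z hz).1
    simp only [Finset.coe_sdiff, Set.mem_sdiff, Finset.mem_coe, Finset.mem_filter,
      Finset.mem_powerset]
    refine ⟨⟨?_, ?_⟩, ?_⟩
    · intro x hx
      rw [mem_ground]
      rcases Finset.mem_union.mp hx with hx | hx
      · have := hSN z hz x hx; omega
      · simp only [pr, Finset.mem_insert, Finset.mem_singleton] at hx
        omega
    · rw [Finset.card_union_of_disjoint (hdis z hz), (hS z hz).2.2,
        Finset.card_pair (hpne _ ht).ne]
      omega
    · intro hmem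
      refine h z.2 (hS z hz).2.1 (hS z hz).2.2 (lower_pair hF
        ((hS z hz).2.1.trans Finset.sdiff_subset) (N := N) ?_ ?_ ?_ ?_ (hpne _ ht) hmem) <;> omega
  · intro z hz w hw hzw
    have hz := Finset.mem_coe.mp hz
    have hw := Finset.mem_coe.mp hw
    have hzw : z.2 ∪ pr z.1 = w.2 ∪ pr w.1 := hzw
    have hfil : ∀ v ∈ D, (v.2 ∪ pr v.1).filter (· ≤ N) = v.2 := by
      intro v hv
      ext x
      simp only [Finset.mem_filter, Finset.mem_union, pr, Finset.mem_insert,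
        Finset.mem_singleton]
      constructor
      · rintro ⟨hx | hx, hxN⟩
        · exact hx
        · omega
      · intro hx
        exact ⟨Or.inl hx, (hSN v hv x hx).2⟩
    have h2 : z.2 = w.2 := by rw [← hfil z hz, ← hfil w hw, hzw]
    have hsum : ∀ v ∈ D, ∑ x ∈ v.2 ∪ pr v.1, x = ∑ x ∈ v.2, x + (2 * N + 2 * c + 1 + v.1) := by
      intro v hv
      have ht := hpne _ (hS v hv).1
      rw [Finset.sum_union (hdis v hv), Finset.sum_pair ht.ne]
      omega
    have h3 := hsum z hz
    rw [hzw, hsum w hw, h2] at h3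
    exact Prod.ext (by omega) h2

lemma choose_le_choose_sub (n r d : ℕ) :
    n.choose (r + 1) ≤ (n - d).choose (r + 1) + d * n.choose r := by
  induction d with
  | zero => simp
  | succ d ih =>
    rcases hcase : n - d with _ | k
    · have h0 : n - (d + 1) = 0 := by omega
      rw [hcase] at ih
      rw [h0]
      exact ih.trans (by gcongr; omega)
    · have h0 : n - (d + 1) = k := by omega
      rw [hcase, Nat.choose_succ_succ] at ih
      rw [h0]
      have : k.choose r ≤ n.choose r := Nat.choose_le_choose r (by omega)
      have h1 : (d + 1) * n.choose r = d * n.choose r + n.choose r := by ring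
      simp only [Nat.succ_eq_add_one] at ih
      omega

theorem stmt_13 (m c : ℕ) (hm : 2 ≤ m) (hc : 1 ≤ c) :
    ∃ K s0 : ℕ, ∀ s : ℕ, s0 ≤ s →
      ∀ F : Finset (Finset ℕ), F ⊆ (ground (m * s + c)).powerset →
        IsShifted F → ¬ HasMatching F s →
        (m - 1) * c < delNum (m * s + c) m (s - c) F →
          (2 * c - 1) * (m * s + c).choose (m - 1) ≤
            yF (m * s + c) F (m + 1) + K * s ^ (m - 2) := by
  -- `(m + 1) c = 2c + (m - 1) c` points are lost: the top `2c` points and the set `X`.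
  refine ⟨(2 * c - 1) * ((m + 1) * c) * (m + c) ^ (m - 2), c, ?_⟩
  intro s hs F _ hF hν hd
  have hms : s ≤ m * s := Nat.le_mul_of_pos_left s (by omega)
  obtain ⟨N, hN⟩ : ∃ N, N + 2 * c = m * s + c := ⟨m * s + c - 2 * c, by omega⟩
  obtain ⟨i, hi, X, hX, hXc, hstuck⟩ := exists_stuck hm hs hN hF hν hd
  have hmiss := missing_card hm hi hF hX hstuck
  rw [hN] at hmiss
  set n := m * s + c with hn
  obtain ⟨r, rfl⟩ := Nat.exists_eq_add_of_le hm
  have e1 : 2 + r - 1 = r + 1 := by omega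
  have e2 : 2 + r - 2 = r := by omega
  rw [e1] at hXc hmiss ⊢
  rw [e2]
  have hch := choose_le_choose_sub n r ((2 + r + 1) * c)
  have hmon : (n - (2 + r + 1) * c).choose (r + 1) ≤ (N - X.card).choose (r + 1) := by
    apply Nat.choose_le_choose
    have : (2 + r + 1) * c = 2 * c + c * (r + 1) := by ring
    omega
  have hpow : n.choose r ≤ (2 + r + c) ^ r * s ^ r := by
    rw [← mul_pow]
    refine (Nat.choose_le_pow n r).trans (Nat.pow_le_pow_left ?_ r)
    have : c ≤ c * s := Nat.le_mul_of_pos_right c (by omega)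
    rw [hn, add_mul (2 + r) c s]
    exact Nat.add_le_add_left this _
  calc (2 * c - 1) * n.choose (r + 1)
      ≤ (2 * c - 1) * ((N - X.card).choose (r + 1)
          + (2 + r + 1) * c * ((2 + r + c) ^ r * s ^ r)) :=
        Nat.mul_le_mul_left _ (hch.trans (Nat.add_le_add hmon (Nat.mul_le_mul_left _ hpow)))
    _ = (2 * c - 1) * (N - X.card).choose (r + 1)
          + (2 * c - 1) * ((2 + r + 1) * c) * (2 + r + c) ^ r * s ^ r := by ring
    _ ≤ _ := Nat.add_le_add_right hmiss _
end

section
/- Let m ≥ 2, s, c be positive integers with c ≤ s and ℓ = s − c ≥ 1, and n = ms + c. If F ⊆ 2^{[n]} is a shifted family with ν(F) < s, then the deletion number of F satisfies d(F) ≤ mc. Equivalently, if d(F) > mc then F contains s pairwise disjoint sets. -/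
/-!
Delete the initial segment `X = [mc]`. If an `ℓ`-matching of `m`-sets of `F` survives, with
`ℓ = s - c ≥ 1`, then any one of its members lies entirely to the right of `[mc]`, so it can be
shifted to every `m`-subset of `[mc]`. Hence `F` contains the `c` consecutive blocks of length `m`
that partition `[mc]`. These blocks together with the surviving matching form a matching of size
`c + (s - c) = s`, contradicting `ν(F) < s`. So deleting `[mc]` leaves no `ℓ`-matching, and the
deletion number is at most `mc`.
-/

open Finset

theorem canShiftTo_of_forall_le {A B : Finset ℕ} (h : B.card = A.card)
    (hle : ∀ b ∈ B, ∀ a ∈ A, b ≤ a) : CanShiftTo A B :=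
  ⟨h, fun i => hle _ (Finset.orderEmbOfFin_mem _ _ i) _ (Finset.orderEmbOfFin_mem _ _ i)⟩

/-- The `j`-th block `{mj + 1, …, mj + m}` of the partition of the positive integers into
intervals of length `m`; the index `j` starts at `0`. -/
def block (m j : ℕ) : Finset ℕ := Finset.Ioc (m * j) (m * j + m)

theorem card_block (m j : ℕ) : (block m j).card = m := by simp [block]

theorem block_subset {m c j : ℕ} (hj : j < c) : block m j ⊆ ground (m * c) := by
  intro x hx
  have : m * (j + 1) ≤ m * c := Nat.mul_le_mul_left m hj
  rw [mul_add, mul_one] at this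
  simp only [block, ground, Finset.mem_Ioc, Finset.mem_Icc] at hx ⊢
  omega

theorem disjoint_block {m i j : ℕ} (h : i ≠ j) : Disjoint (block m i) (block m j) := by
  have key : ∀ {i j : ℕ}, i < j → Disjoint (block m i) (block m j) := by
    intro i j hij
    have : m * (i + 1) ≤ m * j := Nat.mul_le_mul_left m hij
    rw [mul_add, mul_one] at this
    refine Finset.disjoint_left.2 fun x hx hx' => ?_
    simp only [block, Finset.mem_Ioc] at hx hx'
    omega
  rcases lt_or_gt_of_ne h with h | h
  · exact key h
  · exact (key h).symm

theorem stmt_15 (m s c : ℕ) (hm : 2 ≤ m) (hc : 0 < c) (hcs : c ≤ s)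
    (hl : 1 ≤ s - c)
    (F : Finset (Finset ℕ)) (hF : F ⊆ (ground (m * s + c)).powerset)
    (hshift : IsShifted F) (hnu : ¬ HasMatching F s) :
    delNum (m * s + c) m (s - c) F ≤ m * c := by
  have hcn : m * c ≤ m * s + c := (Nat.mul_le_mul_left m hcs).trans (Nat.le_add_right _ _)
  refine Nat.sInf_le ⟨ground (m * c), Finset.Icc_subset_Icc_right hcn, by simp [ground], ?_⟩
  rintro ⟨M, hMF, hMcard, hMdisj⟩
  have hM : ∀ A ∈ M, A ∈ F ∧ A.card = m ∧ A ⊆ ground (m * s + c) \ ground (m * c) :=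
    fun A hA => by simpa using hMF hA
  obtain ⟨A, hA⟩ : M.Nonempty := Finset.card_pos.1 (by omega)
  obtain ⟨hAF, hAm, hAX⟩ := hM A hA
  have hblock : ∀ j < c, block m j ∈ F := by
    intro j hj
    refine hshift A hAF _ (by simp [block])
      (canShiftTo_of_forall_le (by rw [card_block, hAm]) fun b hb a ha => ?_)
    have h1 := block_subset hj hb
    have h2 := hAX ha
    simp only [ground, Finset.mem_sdiff, Finset.mem_Icc] at h1 h2
    omega
  have hcross : ∀ j < c, ∀ B ∈ M, Disjoint (block m j) B := fun j hj B hB =>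
    (Finset.disjoint_sdiff.mono_right (hM B hB).2.2).mono_left (block_subset hj)
  -- Blocks are nonempty, so disjointness also gives distinctness, which the count needs.
  have hself : ∀ j, ¬ Disjoint (block m j) (block m j) := by
    intro j h
    have h0 := card_block m j
    rw [disjoint_self.1 h] at h0
    simp only [Finset.bot_eq_empty, Finset.card_empty] at h0
    omega
  have hinj : Function.Injective (block m) := by
    intro i j hij
    by_contra hne
    have h := disjoint_block (m := m) hne
    rw [hij] at h
    exact hself j h
  refine hnu ⟨(Finset.range c).image (block m) ∪ M, ?_, ?_, ?_⟩
  · intro B hB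
    rcases Finset.mem_union.1 hB with hB | hB
    · obtain ⟨j, hj, rfl⟩ := Finset.mem_image.1 hB
      exact hblock j (Finset.mem_range.1 hj)
    · exact (hM B hB).1
  · rw [Finset.card_union_of_disjoint, Finset.card_image_of_injective _ hinj, Finset.card_range,
      hMcard]
    · omega
    · refine Finset.disjoint_left.2 fun B hB hBM => ?_
      obtain ⟨j, hj, rfl⟩ := Finset.mem_image.1 hB
      exact hself j (hcross j (Finset.mem_range.1 hj) _ hBM)
  · rw [Finset.coe_union]
    refine Set.pairwiseDisjoint_union.2 ⟨?_, hMdisj, ?_⟩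
    · intro P hP Q hQ hPQ
      obtain ⟨i, -, rfl⟩ := Finset.mem_image.1 (Finset.mem_coe.1 hP)
      obtain ⟨j, -, rfl⟩ := Finset.mem_image.1 (Finset.mem_coe.1 hQ)
      exact disjoint_block fun h => hPQ (by rw [h])
    · intro P hP Q hQ _
      obtain ⟨i, hi, rfl⟩ := Finset.mem_image.1 (Finset.mem_coe.1 hP)
      exact hcross i (Finset.mem_range.1 hi) Q hQ
end

section
/- Let m ≥ 2 and c ≥ 2 be fixed integers. There exist a constant K = K(m,c) and s0 = s0(m,c) such that for all s ≥ s0, with n = ms + c and ℓ = s − c: if F ⊆ 2^{[n]} is a shifted family with ν(F) < s and F ⊄ Q(m,s,ℓ), then |2^{[n]} ∖ F| ≥ (2c+3)·C(n, m−1) − K·s^{m−2}. -/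
/-!
Replace `F` by the family `G` of all subsets of `[n]` dominated by a non-empty member of `F`
(`domClosure`). A matching of `G` yields one of `F` of the same size, and `G` misses at most one set
more than `F`, so it suffices to argue about `G`, which is closed under shifting and supersets.

Suppose that too few sets are missing. Fix constants `N` and `C`. A tail `S` among the last `N`
elements is *good* if all its unions with `m - 1` elements of `[C]` lie in `G`. By closure, a bad tail
forces `S ∪ Y` to be missing for *every* `Y ⊆ (C, n - N]` of size `m - 1`, which is
`C(n, m - 1) - O(s ^ (m - 2))` missing sets. Hence there are at most `2c + 2` bad tails
(`bad_tails_le`). In the same way, all `m`-sets avoiding a final segment of linear size are in `G`, as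
are all sets consisting of one element up to `n - N` and `m - 1` elements up to `n / 2`. These two
facts allow a greedy choice of disjoint `m`-sets (`exists_matching_fill`), so only the last `N`
elements matter.

Since `n = ms + c`, a matching of size `s` may waste `c` elements: an uncovered element costs one,
and so does a set of size `m + 1` built on a good pair. Let the bad singletons be the last `p`
elements, so that `p ≤ 2c + 1`. If `p ≤ c`, these elements are left uncovered. If `p = c + r` with
`1 ≤ r ≤ c`, a nested pairing of the first `2r` of them uses good pairs only, as one bad pair would
create `c + 2 - r` bad pairs and thus `2c + 3` bad tails in total; the cost is `r + (c - r) = c`. In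
both cases `G` has a matching of size `s`, a contradiction. If `p = 2c + 1`, all pairs are good, and
`A ∈ F \ Q` is used: if `A` is non-empty, for some `j` it dominates the set consisting of the
first `m - 1 - j` elements and the first `2j + 1` of the last `2c + 1`
(`exists_dom_of_notMem_Qfam`); this set together with `c - j` good pairs on the other bad elements
extends to a matching of size `s`. If `A = ∅`, it is added to a matching of `F` of size `s - 1`.
-/

open Finset

/-! ### Domination -/

/-- `A` dominates `B`: some injection of `A` into `B` never increases an element. This combines
shifting with passing to a superset; no equality of cardinalities is required. -/
def Dom (A B : Finset ℕ) : Prop :=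
  ∃ g : ℕ → ℕ, Set.InjOn g A ∧ (∀ a ∈ A, g a ∈ B) ∧ ∀ a ∈ A, g a ≤ a

lemma Dom.of_subset {A B : Finset ℕ} (h : A ⊆ B) : Dom A B :=
  ⟨id, Set.injOn_id _, fun _ ha => h ha, fun _ _ => le_rfl⟩

lemma Dom.trans {A B E : Finset ℕ} (h : Dom A B) (h' : Dom B E) : Dom A E := by
  obtain ⟨g, g1, g2, g3⟩ := h
  obtain ⟨f, f1, f2, f3⟩ := h'
  refine ⟨f ∘ g, f1.comp g1 (fun a ha => g2 a ha), fun a ha => f2 _ (g2 a ha), fun a ha => ?_⟩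
  exact (f3 _ (g2 a ha)).trans (g3 a ha)

lemma Dom.union {A B A' B' : Finset ℕ} (h : Dom A B) (h' : Dom A' B') (hd : Disjoint B B') :
    Dom (A ∪ A') (B ∪ B') := by
  obtain ⟨g, g1, g2, g3⟩ := h
  obtain ⟨f, f1, f2, f3⟩ := h'
  refine ⟨fun a => if a ∈ A then g a else f a, ?_, ?_, ?_⟩
  · intro x hx y hy hxy
    simp only [coe_union, Set.mem_union, mem_coe] at hx hy
    by_cases hxA : x ∈ A <;> by_cases hyA : y ∈ A <;> simp only [hxA, hyA, if_true, if_false] at hxy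
    · exact g1 hxA hyA hxy
    · exact absurd hxy (disjoint_iff_ne.1 hd _ (g2 x hxA) _ (f2 y (hy.resolve_left hyA)))
    · exact absurd hxy.symm
        (disjoint_iff_ne.1 hd _ (g2 y hyA) _ (f2 x (hx.resolve_left hxA)))
    · exact f1 (hx.resolve_left hxA) (hy.resolve_left hyA) hxy
  · intro a ha
    by_cases hA : a ∈ A
    · simp [hA, g2 a hA]
    · simp [hA, f2 a ((mem_union.1 ha).resolve_left hA)]
  · intro a ha
    by_cases hA : a ∈ A
    · simp [hA, g3 a hA]
    · simp [hA, f3 a ((mem_union.1 ha).resolve_left hA)]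

lemma Dom.of_forall_le {A B : Finset ℕ} (hc : A.card ≤ B.card) (h : ∀ a ∈ A, ∀ b ∈ B, b ≤ a) :
    Dom A B := by
  obtain ⟨B', hB', hc'⟩ := exists_subset_card_eq hc
  let e := Finset.equivOfCardEq hc'.symm
  refine ⟨fun a => if ha : a ∈ A then e ⟨a, ha⟩ else 0, ?_, ?_, ?_⟩
  · intro x hx y hy hxy
    simp only [mem_coe] at hx hy
    simp only [hx, hy, dif_pos] at hxy
    simpa using e.injective (Subtype.ext hxy)
  · intro a ha
    simp only [ha, dif_pos]
    exact hB' (e ⟨a, ha⟩).2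
  · intro a ha
    simp only [ha, dif_pos]
    exact h a ha _ (hB' (e ⟨a, ha⟩).2)

lemma Dom.singleton {a b : ℕ} (h : b ≤ a) : Dom {a} {b} :=
  Dom.of_forall_le (by simp) (by simpa using h)

/-- A set of at most `k` elements, all above `a`, dominates the first `k` integers above `a`: each
element is sent to `a` plus its rank. -/
lemma Dom.segment {A : Finset ℕ} {a k : ℕ} (hA : ∀ x ∈ A, a < x) (hk : A.card ≤ k) :
    Dom A (Ioc a (a + k)) := by
  refine ⟨fun x => a + (A.filter (· ≤ x)).card, ?_, ?_, ?_⟩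
  · have key : ∀ x ∈ A, ∀ y ∈ A, x < y →
        (A.filter (· ≤ x)).card < (A.filter (· ≤ y)).card := by
      intro x hx y hy hxy
      apply card_lt_card
      rw [ssubset_iff_of_subset (fun z hz => by
        have hz' := mem_filter.1 hz
        exact mem_filter.2 ⟨hz'.1, by omega⟩)]
      exact ⟨y, by simp [hy], by simp [hxy]⟩
    intro x hx y hy hxy
    rcases lt_trichotomy x y with h | h | h
    · have := key x hx y hy h; simp only at hxy; omega
    · exact h
    · have := key y hy x hx h; simp only at hxy; omega
  · intro x hx
    have h1 : 0 < (A.filter (· ≤ x)).card := card_pos.2 ⟨x, by simp [hx]⟩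
    have h2 := card_filter_le A (· ≤ x)
    simp only [mem_Ioc]; omega
  · intro x hx
    have h1 : A.filter (· ≤ x) ⊆ Ioc a x := fun z hz => by
      simp only [mem_filter] at hz; have := hA z hz.1; simp only [mem_Ioc]; omega
    have h2 := card_le_card h1
    have := hA x hx
    simp only [Nat.card_Ioc] at h2; simp only; omega

/-- The image of `A` under an injection that never increases an element is a shift of `A`. -/
lemma canShiftTo_image_s18 {A : Finset ℕ} {g : ℕ → ℕ} (hg : Set.InjOn g A) (hle : ∀ a ∈ A, g a ≤ a) :
    CanShiftTo A (A.image g) := by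
  refine ⟨card_image_of_injOn hg, fun i => ?_⟩
  set B := A.image g with hB
  have h : B.card = A.card := card_image_of_injOn hg
  by_contra! hlt
  set t := A.orderEmbOfFin rfl i with ht
  have hlt' : t < B.orderEmbOfFin h i := hlt
  -- The `i + 1` smallest elements of `A` have images below `t`, among the `i` smallest of `B`.
  have h1 : ((Iic i).image (fun j => g (A.orderEmbOfFin rfl j))).card = i + 1 := by
    rw [card_image_of_injOn, Fin.card_Iic]
    intro x _ y _ hxy
    exact (A.orderEmbOfFin rfl).injective
      (hg (orderEmbOfFin_mem A rfl x) (orderEmbOfFin_mem A rfl y) hxy)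
  have h2 : (Iic i).image (fun j => g (A.orderEmbOfFin rfl j)) ⊆
      (Iio i).image (fun j => B.orderEmbOfFin h j) := by
    intro z hz
    obtain ⟨j, hj, rfl⟩ := mem_image.1 hz
    have hm := orderEmbOfFin_mem A rfl j
    have hmB : g (A.orderEmbOfFin rfl j) ∈ B := mem_image_of_mem g hm
    have hle' := hle _ hm
    have hjt : A.orderEmbOfFin rfl j ≤ t := (A.orderEmbOfFin rfl).monotone (mem_Iic.1 hj)
    have hr : g (A.orderEmbOfFin rfl j) ∈ Set.range (B.orderEmbOfFin h) := by
      rw [range_orderEmbOfFin]; exact hmB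
    obtain ⟨l, hl⟩ := hr
    refine mem_image.2 ⟨l, ?_, hl⟩
    rw [mem_Iio, ← (B.orderEmbOfFin h).lt_iff_lt, hl]
    omega
  have h3 := card_le_card h2
  have h4 := card_image_le (s := Iio i) (f := fun j => B.orderEmbOfFin h j)
  rw [Fin.card_Iio] at h4
  omega

/-! ### Building matchings -/

/-- A tail `S` is good if every set of `m - 1` elements of `[C]` completes it to a member of `F`.
In use, `S` lies among the last few elements of the ground set. -/
def Good (F : Finset (Finset ℕ)) (m C : ℕ) (S : Finset ℕ) : Prop :=
  ∀ X ⊆ Ioc 0 C, X.card = m - 1 → S ∪ X ∈ F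

lemma matching_union {F M M' : Finset (Finset ℕ)} (h0 : ∅ ∉ F) (hM : M ⊆ F) (hM' : M' ⊆ F)
    (hd : (M : Set (Finset ℕ)).PairwiseDisjoint id)
    (hd' : (M' : Set (Finset ℕ)).PairwiseDisjoint id)
    (hx : ∀ A ∈ M, ∀ B ∈ M', Disjoint A B) :
    M ∪ M' ⊆ F ∧ (M ∪ M').card = M.card + M'.card ∧
      ((M ∪ M' : Finset (Finset ℕ)) : Set (Finset ℕ)).PairwiseDisjoint id := by
  refine ⟨union_subset hM hM', card_union_of_disjoint ?_, ?_⟩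
  · rw [disjoint_left]
    intro A hA hA'
    have := hx A hA A hA'
    rw [disjoint_self, bot_eq_empty] at this
    exact h0 (this ▸ hM hA)
  · intro A hA B hB hAB
    simp only [coe_union, Set.mem_union, mem_coe] at hA hB
    rcases hA with hA | hA <;> rcases hB with hB | hB
    · exact hd hA hB hAB
    · exact hx A hA B hB
    · exact (hx B hB A hA).symm
    · exact hd' hA hB hAB

lemma matching_cons {F M : Finset (Finset ℕ)} {A : Finset ℕ} (h0 : ∅ ∉ F) (hM : M ⊆ F)
    (hA : A ∈ F) (hd : (M : Set (Finset ℕ)).PairwiseDisjoint id)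
    (hx : ∀ B ∈ M, Disjoint A B) :
    insert A M ⊆ F ∧ (insert A M).card = M.card + 1 ∧
      ((insert A M : Finset (Finset ℕ)) : Set (Finset ℕ)).PairwiseDisjoint id := by
  have := matching_union (M := {A}) h0 (by simpa using hA) hM (by simp) hd (by simpa using hx)
  rw [← insert_eq, card_singleton, add_comm 1] at this
  exact this

/-- Pairwise disjoint good tails complete to disjoint members of `F`. -/
lemma exists_matching_tails {F : Finset (Finset ℕ)} {m C : ℕ} (h0 : ∅ ∉ F) (T : ℕ → Finset ℕ)
    (q : ℕ) (hT : ∀ i < q, ∀ x ∈ T i, C < x)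
    (hTd : ∀ i < q, ∀ j < q, i ≠ j → Disjoint (T i) (T j))
    (hG : ∀ i < q, Good F m C (T i)) (U : Finset ℕ) (hU : U ⊆ Ioc 0 C)
    (hUc : U.card = (m - 1) * q) :
    ∃ M ⊆ F, M.card = q ∧ (M : Set (Finset ℕ)).PairwiseDisjoint id ∧
      ∀ B ∈ M, ∀ x ∈ B, x ∈ U ∨ ∃ i < q, x ∈ T i := by
  induction q generalizing U with
  | zero => exact ⟨∅, by simp, by simp, by simp, by simp⟩
  | succ q ih =>
    obtain ⟨X, hX, hXc⟩ := exists_subset_card_eq (s := U) (n := m - 1)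
      (by rw [hUc]; exact Nat.le_mul_of_pos_right _ (by omega))
    obtain ⟨M, hM, hMc, hMd, hMx⟩ := ih (fun i hi => hT i (by omega))
      (fun i hi j hj => hTd i (by omega) j (by omega)) (fun i hi => hG i (by omega)) (U \ X)
      (sdiff_subset.trans hU) (by rw [card_sdiff_of_subset hX, hXc, hUc, Nat.mul_succ]; omega)
    have hA := hG q (by omega) X (hX.trans hU) hXc
    obtain ⟨a1, a2, a3⟩ := matching_cons h0 hM hA hMd (by
      intro B hB
      rw [disjoint_left]
      intro x hx hxB
      rcases mem_union.1 hx with hx | hx <;> rcases hMx B hB x hxB with h | ⟨i, hi, h⟩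
      · have := mem_Ioc.1 (hU (sdiff_subset h)); have := hT q (by omega) x hx; omega
      · exact disjoint_left.1 (hTd i (by omega) q (by omega) (by omega)) h hx
      · exact (mem_sdiff.1 h).2 hx
      · have := mem_Ioc.1 (hU (hX hx)); have := hT i (by omega) x h; omega)
    refine ⟨_, a1, by rw [a2, hMc], a3, ?_⟩
    intro B hB x hx
    rcases mem_insert.1 hB with rfl | hB
    · rcases mem_union.1 hx with hx | hx
      · exact Or.inr ⟨q, by omega, hx⟩
      · exact Or.inl (hX hx)
    · rcases hMx B hB x hx with h | ⟨i, hi, h⟩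
      · exact Or.inl (sdiff_subset h)
      · exact Or.inr ⟨i, by omega, h⟩

/-- Greedy filling. The `m`-sets inside `[W]` are in `F`, and so are the sets formed by one element
of `(W, hi]` and `m - 1` elements of `[D]`. Elements of `U` in `(W, hi]` are used up one at a time,
each with `m - 1` elements of `U ∩ [D]`, which preserves the balance condition `hbal`; what is left
then lies in `[W]`. -/
lemma exists_matching_fill {F : Finset (Finset ℕ)} {m D W hi : ℕ} (hm : 1 ≤ m) (h0 : ∅ ∉ F)
    (hDW : D ≤ W)
    (h1 : ∀ X ⊆ Ioc 0 W, X.card = m → X ∈ F)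
    (h2 : ∀ X ⊆ Ioc 0 D, X.card = m - 1 → ∀ y ∈ Ioc W hi, insert y X ∈ F)
    (k : ℕ) (U : Finset ℕ) (hU : U ⊆ Ioc 0 hi) (hUc : m * k ≤ U.card)
    (hbal : (m - 1) * (U ∩ Ioc W hi).card ≤ (U ∩ Ioc 0 D).card) :
    ∃ M ⊆ F, M.card = k ∧ (M : Set (Finset ℕ)).PairwiseDisjoint id ∧ ∀ B ∈ M, B ⊆ U := by
  induction k generalizing U with
  | zero => exact ⟨∅, by simp, by simp, by simp, by simp⟩
  | succ k ih =>
    suffices h : ∃ A ∈ F, A ⊆ U ∧ A.card = m ∧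
        (m - 1) * ((U \ A) ∩ Ioc W hi).card ≤ ((U \ A) ∩ Ioc 0 D).card by
      obtain ⟨A, hA, hAU, hAc, hAb⟩ := h
      obtain ⟨M, hM, hMc, hMd, hMx⟩ := ih (U \ A) (sdiff_subset.trans hU)
        (by rw [card_sdiff_of_subset hAU, hAc]; rw [Nat.mul_succ] at hUc; omega) hAb
      obtain ⟨a1, a2, a3⟩ := matching_cons h0 hM hA hMd (fun B hB =>
        disjoint_left.2 fun x hx hxB => (mem_sdiff.1 (hMx B hB hxB)).2 hx)
      refine ⟨_, a1, by rw [a2, hMc], a3, fun B hB => ?_⟩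
      rcases mem_insert.1 hB with rfl | hB
      · exact hAU
      · exact (hMx B hB).trans sdiff_subset
    rcases (U ∩ Ioc W hi).eq_empty_or_nonempty with he | ⟨y, hy⟩
    · obtain ⟨A, hA, hAc⟩ := exists_subset_card_eq (s := U) (n := m)
        (le_trans (Nat.le_mul_of_pos_right _ (by omega)) hUc)
      refine ⟨A, h1 A (fun x hx => ?_) hAc, hA, hAc, ?_⟩
      · have hx1 := mem_Ioc.1 (hU (hA hx))
        have : x ∉ U ∩ Ioc W hi := by simp [he]
        simp only [mem_inter, hA hx, mem_Ioc, true_and] at this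
        simp only [mem_Ioc]; omega
      · have : (U \ A) ∩ Ioc W hi = ∅ := by
          rw [← subset_empty, ← he]; exact inter_subset_inter_right sdiff_subset
        simp [this]
    · obtain ⟨X, hX, hXc⟩ := exists_subset_card_eq (s := U ∩ Ioc 0 D) (n := m - 1)
        (le_trans (Nat.le_mul_of_pos_right _ (card_pos.2 ⟨y, hy⟩)) hbal)
      have hyU := (mem_inter.1 hy).1
      have hyW := mem_Ioc.1 (mem_inter.1 hy).2
      have hXD : ∀ x ∈ X, x ≤ D := fun x hx => (mem_Ioc.1 (mem_inter.1 (hX hx)).2).2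
      have hyX : y ∉ X := fun h => by have := hXD y h; omega
      refine ⟨insert y X, h2 X (hX.trans inter_subset_right) hXc y (mem_inter.1 hy).2,
        insert_subset hyU (hX.trans inter_subset_left), by rw [card_insert_of_notMem hyX]; omega, ?_⟩
      have e1 : (U \ insert y X) ∩ Ioc W hi = (U ∩ Ioc W hi).erase y := by
        ext x
        simp only [mem_inter, mem_sdiff, mem_insert, mem_erase, not_or]
        constructor
        · tauto
        · rintro ⟨a, b, d⟩
          exact ⟨⟨b, a, fun h => by have := hXD x h; have := mem_Ioc.1 d; omega⟩, d⟩
      have e2 : (U \ insert y X) ∩ Ioc 0 D = (U ∩ Ioc 0 D) \ X := by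
        ext x
        simp only [mem_inter, mem_sdiff, mem_insert, not_or]
        constructor
        · tauto
        · rintro ⟨⟨a, b⟩, d⟩
          exact ⟨⟨a, fun h => by have := mem_Ioc.1 b; omega, d⟩, b⟩
      rw [e1, e2, card_erase_of_mem hy, card_sdiff_of_subset hX, hXc, Nat.mul_sub, mul_one]
      omega

/-- Pairwise disjoint good tails beyond `hi` are completed inside `[C] \ R`, and the rest of
`[hi] \ R` is filled greedily by `k` sets of size `m`. -/
lemma exists_matching_mix {F : Finset (Finset ℕ)} {m C D W hi : ℕ} (hm : 1 ≤ m) (h0 : ∅ ∉ F)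
    (hCD : C ≤ D) (hDW : D ≤ W) (hWh : W ≤ hi)
    (hDC : (m - 1) * (hi - W) + C ≤ D)
    (h1 : ∀ X ⊆ Ioc 0 W, X.card = m → X ∈ F)
    (h2 : ∀ X ⊆ Ioc 0 D, X.card = m - 1 → ∀ y ∈ Ioc W hi, insert y X ∈ F)
    (q k : ℕ) (T : ℕ → Finset ℕ) (hT : ∀ i < q, ∀ x ∈ T i, hi < x)
    (hTd : ∀ i < q, ∀ j < q, i ≠ j → Disjoint (T i) (T j))
    (hG : ∀ i < q, Good F m C (T i)) (R : Finset ℕ) (hR : R ⊆ Ioc 0 C)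
    (hRC : R.card + (m - 1) * q ≤ C) (hk : R.card + (m - 1) * q + m * k ≤ hi) :
    ∃ M ⊆ F, M.card = q + k ∧ (M : Set (Finset ℕ)).PairwiseDisjoint id ∧
      ∀ B ∈ M, ∀ x ∈ B, x ∉ R ∧ (x ≤ hi ∨ ∃ i < q, x ∈ T i) := by
  obtain ⟨U', hU', hUc'⟩ := exists_subset_card_eq (s := Ioc 0 C \ R) (n := (m - 1) * q)
    (by rw [card_sdiff_of_subset hR, Nat.card_Ioc]; omega)
  obtain ⟨M, hM, hMc, hMd, hMx⟩ := exists_matching_tails h0 T q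
    (fun i hi x hx => by have := hT i hi x hx; omega) hTd hG U' (hU'.trans sdiff_subset) hUc'
  have hRU : R ∪ U' ⊆ Ioc 0 C := union_subset hR (hU'.trans sdiff_subset)
  have hCh : Ioc 0 C ⊆ Ioc 0 hi := Ioc_subset_Ioc_right (by omega)
  have hRUc : (R ∪ U').card = R.card + (m - 1) * q := by
    rw [card_union_of_disjoint, hUc']
    exact disjoint_left.2 fun x hx hx' => (mem_sdiff.1 (hU' hx')).2 hx
  obtain ⟨M', hM', hMc', hMd', hMx'⟩ := exists_matching_fill hm h0 hDW h1 h2 k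
    (Ioc 0 hi \ (R ∪ U')) sdiff_subset
    (by rw [card_sdiff_of_subset (hRU.trans hCh), Nat.card_Ioc]; omega) (by
      have a1 : ((Ioc 0 hi \ (R ∪ U')) ∩ Ioc W hi).card ≤ hi - W := by
        simpa using card_le_card (inter_subset_right (s₁ := Ioc 0 hi \ (R ∪ U')) (s₂ := Ioc W hi))
      have a2 : D - C ≤ ((Ioc 0 hi \ (R ∪ U')) ∩ Ioc 0 D).card := by
        rw [← Nat.card_Ioc]
        apply card_le_card
        intro x hx
        have hx' := mem_Ioc.1 hx
        simp only [mem_inter, mem_sdiff]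
        refine ⟨⟨mem_Ioc.2 (by omega), fun h => ?_⟩, mem_Ioc.2 (by omega)⟩
        have := mem_Ioc.1 (hRU h); omega
      have a3 := Nat.mul_le_mul_left (m - 1) a1
      omega)
  obtain ⟨b1, b2, b3⟩ := matching_union h0 hM hM' hMd hMd' (by
    intro A hA B hB
    rw [disjoint_left]
    intro x hx hxB
    have hB' := mem_sdiff.1 (hMx' B hB hxB)
    rcases hMx A hA x hx with h | ⟨i, hi, h⟩
    · exact hB'.2 (mem_union_right _ h)
    · have := hT i hi x h; have := mem_Ioc.1 hB'.1; omega)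
  refine ⟨_, b1, by rw [b2, hMc, hMc'], b3, fun B hB x hx => ?_⟩
  rcases mem_union.1 hB with hB | hB
  · rcases hMx B hB x hx with h | ⟨i, hi, h⟩
    · have := mem_sdiff.1 (hU' h)
      exact ⟨this.2, Or.inl (by have := mem_Ioc.1 this.1; omega)⟩
    · refine ⟨fun hr => ?_, Or.inr ⟨i, hi, h⟩⟩
      have := hT i hi x h; have := mem_Ioc.1 (hR hr); omega
  · have := mem_sdiff.1 (hMx' B hB hx)
    exact ⟨fun h => this.2 (mem_union_left _ h), Or.inl (mem_Ioc.1 this.1).2⟩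

/-! ### Counting missing sets -/

/-- If no set of `S`, all lying in `(hi, n]`, is completed to a member of `F` by `k` elements of
`(lo, hi]`, all these unions are distinct missing sets. -/
lemma count_missing {F : Finset (Finset ℕ)} {n lo hi k : ℕ} (hn : hi ≤ n)
    (S : Finset (Finset ℕ)) (hS : ∀ A ∈ S, A ⊆ Ioc hi n)
    (hmiss : ∀ A ∈ S, ∀ Y ⊆ Ioc lo hi, Y.card = k → A ∪ Y ∉ F) :
    S.card * (hi - lo).choose k ≤ ((ground n).powerset \ F).card := by
  rw [← Nat.card_Ioc lo hi, ← card_powersetCard, ← card_product]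
  apply card_le_card_of_injOn (fun p => p.1 ∪ p.2)
  · rintro ⟨A, Y⟩ h
    simp only [coe_product, Set.mem_prod, mem_coe, mem_powersetCard] at h
    obtain ⟨hA, hY, hYc⟩ := h
    simp only [coe_sdiff, Set.mem_sdiff, mem_coe, mem_powerset]
    refine ⟨union_subset (fun x hx => ?_) (fun x hx => ?_), hmiss A hA Y hY hYc⟩
    · have := mem_Ioc.1 (hS A hA hx); simp only [ground, mem_Icc]; omega
    · have := mem_Ioc.1 (hY hx); simp only [ground, mem_Icc]; omega
  · rintro ⟨A, Y⟩ h ⟨A', Y'⟩ h' e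
    simp only [coe_product, Set.mem_prod, mem_coe, mem_powersetCard] at h h' e
    have key : ∀ A ∈ S, ∀ Y ⊆ Ioc lo hi, (A ∪ Y).filter (hi < ·) = A ∧
        (A ∪ Y).filter (· ≤ hi) = Y := by
      intro A hA Y hY
      constructor
      · ext x
        simp only [mem_filter, mem_union]
        refine ⟨fun ⟨a, b⟩ => a.resolve_right fun h => ?_, fun a => ⟨Or.inl a, ?_⟩⟩
        · have := mem_Ioc.1 (hY h); omega
        · have := mem_Ioc.1 (hS A hA a); omega
      · ext x
        simp only [mem_filter, mem_union]
        refine ⟨fun ⟨a, b⟩ => a.resolve_left fun h => ?_, fun a => ⟨Or.inr a, ?_⟩⟩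
        · have := mem_Ioc.1 (hS A hA h); omega
        · have := mem_Ioc.1 (hY a); omega
    have k1 := key A h.1 Y h.2.1
    have k2 := key A' h'.1 Y' h'.2.1
    rw [e] at k1
    exact Prod.ext (k1.1.symm.trans k2.1) (k1.2.symm.trans k2.2)

lemma Dom.pair {a b a' b' : ℕ} (ha : a ≤ a') (hb : b ≤ b') (hab : a ≠ b) :
    Dom {a', b'} {a, b} := by
  rw [insert_eq, insert_eq]
  exact (Dom.singleton ha).union (Dom.singleton hb) (by simpa using hab)

lemma Good.mono {F : Finset (Finset ℕ)} {n m C : ℕ}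
    (hcl : ∀ A ∈ F, ∀ B ⊆ ground n, Dom A B → B ∈ F) (hC : C ≤ n)
    {S S' : Finset ℕ} (h : Dom S S') (hS' : ∀ x ∈ S', C < x ∧ x ≤ n) (hg : Good F m C S) :
    Good F m C S' := by
  intro X hX hXc
  refine hcl _ (hg X hX hXc) _ (fun x hx => ?_) (h.union (Dom.of_subset subset_rfl) ?_)
  · simp only [ground, mem_Icc]
    rcases mem_union.1 hx with hx | hx
    · have := hS' x hx; omega
    · have := mem_Ioc.1 (hX hx); omega
  · refine disjoint_left.2 fun x hx hx' => ?_
    have := hS' x hx; have := mem_Ioc.1 (hX hx'); omega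

/-- A bad tail has no completion whatsoever by `m - 1` elements above `C`. -/
lemma notMem_of_not_good {F : Finset (Finset ℕ)} {n m C : ℕ}
    (hcl : ∀ A ∈ F, ∀ B ⊆ ground n, Dom A B → B ∈ F) (hC : C ≤ n)
    {S Y : Finset ℕ} (hS : ∀ x ∈ S, C < x ∧ x ≤ n) (hg : ¬ Good F m C S)
    (hY : ∀ y ∈ Y, C < y) (hYc : Y.card = m - 1) : S ∪ Y ∉ F := by
  intro hmem
  apply hg
  intro X hX hXc
  refine hcl _ hmem _ (fun x hx => ?_) ((Dom.of_subset subset_rfl).union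
    (Dom.of_forall_le (by omega) fun a ha b hb => ?_) ?_)
  · simp only [ground, mem_Icc]
    rcases mem_union.1 hx with hx | hx
    · have := hS x hx; omega
    · have := mem_Ioc.1 (hX hx); omega
  · have := hY a ha; have := mem_Ioc.1 (hX hb); omega
  · refine disjoint_left.2 fun x hx hx' => ?_
    have := hS x hx; have := mem_Ioc.1 (hX hx'); omega

/-- When few sets are missing, there are at most `2c + 2` bad tails beyond `hi`. If the last `p ≥ 1`
singletons are bad, then so is `∅`, and the bad tails counted here are `∅`, these singletons and the
pairs in `P`. -/
lemma bad_tails_le {F : Finset (Finset ℕ)} {n m c C hi : ℕ}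
    (hcl : ∀ A ∈ F, ∀ B ⊆ ground n, Dom A B → B ∈ F) (hCh : C ≤ hi) (hhi : hi ≤ n)
    (hmiss : ((ground n).powerset \ F).card < (2 * c + 3) * (hi - C).choose (m - 1))
    {p : ℕ} (hp1 : 1 ≤ p) (hpn : p ≤ n - hi) (hp : ∀ e ∈ Ioc (n - p) n, ¬ Good F m C {e})
    (P : Finset (Finset ℕ)) (hP : ∀ S ∈ P, S.card = 2 ∧ S ⊆ Ioc hi n ∧ ¬ Good F m C S) :
    1 + p + P.card ≤ 2 * c + 2 := by
  have hE : ¬ Good F m C ∅ := fun h => hp n (by simp only [mem_Ioc]; omega)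
    (h.mono hcl (by omega) (Dom.of_subset (empty_subset _))
      (fun x hx => by rw [mem_singleton] at hx; omega))
  set S : Finset (Finset ℕ) := insert ∅ ((Ioc (n - p) n).image (fun e => ({e} : Finset ℕ)) ∪ P)
  have hScard : S.card = 1 + p + P.card := by
    rw [card_insert_of_notMem, card_union_of_disjoint,
      card_image_of_injective _ singleton_injective, Nat.card_Ioc]
    · omega
    · refine disjoint_left.2 fun A hA hA' => ?_
      obtain ⟨e, -, rfl⟩ := mem_image.1 hA
      simpa using (hP _ hA').1
    · intro h
      rcases mem_union.1 h with h | h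
      · obtain ⟨e, -, he⟩ := mem_image.1 h
        exact singleton_ne_empty e he
      · simpa using (hP _ h).1
  have hSp : ∀ A ∈ S, A ⊆ Ioc hi n ∧ ¬ Good F m C A := by
    intro A hA
    rcases mem_insert.1 hA with rfl | hA
    · exact ⟨empty_subset _, hE⟩
    rcases mem_union.1 hA with hA | hA
    · obtain ⟨e, he, rfl⟩ := mem_image.1 hA
      refine ⟨?_, hp e he⟩
      rw [singleton_subset_iff]
      simp only [mem_Ioc] at he ⊢; omega
    · exact (hP A hA).2
  have := count_missing (F := F) (lo := C) (k := m - 1) hhi S (fun A hA => (hSp A hA).1)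
    (fun A hA Y hY hYc => notMem_of_not_good hcl (by omega)
      (fun x hx => by have := mem_Ioc.1 ((hSp A hA).1 hx); omega) (hSp A hA).2
      (fun y hy => (mem_Ioc.1 (hY hy)).1) hYc)
  rw [← hScard]
  by_contra! hlt
  have h3 : (2 * c + 3) * (hi - C).choose (m - 1) ≤ S.card * (hi - C).choose (m - 1) :=
    Nat.mul_le_mul_right _ (by omega)
  omega

/-! ### The dichotomy for dominance-closed families -/

/-- Let the last `p` singletons be exactly the bad ones. If `p ≤ 2c`, there is a matching of
size `s`. Otherwise `p = 2c + 1` and all pairs are good; then the set consisting of the first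
`m - 1 - j` elements and the first `2j + 1` of the last `2c + 1` elements can be avoided by a
matching of size `s - 1`. -/
theorem core {F : Finset (Finset ℕ)} {n m c s C D W hi : ℕ} (hm : 2 ≤ m) (hc : 2 ≤ c)
    (hn : n = m * s + c) (h0 : ∅ ∉ F)
    (hcl : ∀ A ∈ F, ∀ B ⊆ ground n, Dom A B → B ∈ F)
    (hhi : hi ≤ n) (hN : 2 * c + 2 ≤ n - hi) (hNs : n - hi ≤ s) (hNC : m * (n - hi + 2) ≤ C)
    (hCD : C ≤ D) (hDW : D ≤ W) (hWh : W ≤ hi) (hDC : (m - 1) * (hi - W) + C ≤ D)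
    (h1 : ∀ X ⊆ Ioc 0 W, X.card = m → X ∈ F)
    (h2 : ∀ X ⊆ Ioc 0 D, X.card = m - 1 → ∀ y ∈ Ioc W hi, insert y X ∈ F)
    (hmiss : ((ground n).powerset \ F).card < (2 * c + 3) * (hi - C).choose (m - 1)) :
    HasMatching F s ∨ ∀ j ≤ c, j ≤ m - 1 → ∃ M ⊆ F, M.card = s - 1 ∧
      (M : Set (Finset ℕ)).PairwiseDisjoint id ∧ ∀ B ∈ M,
        Disjoint B (Ioc 0 (m - 1 - j) ∪ Ioc (n - 2 * c - 1) (n - 2 * c - 1 + (2 * j + 1))) := by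
  have hCh : C ≤ hi := by omega
  have hle := fun {p : ℕ} => bad_tails_le (p := p) hcl hCh hhi hmiss
  have hex : ∃ p, p ≤ 2 * c + 1 ∧ Good F m C {n - p} := by
    by_contra! hno
    have := hle (p := 2 * c + 2) (by omega) (by omega) (fun e he => by
      have he' := mem_Ioc.1 he
      have := hno (n - e) (by omega)
      rwa [show n - (n - e) = e by omega] at this) ∅ (by simp)
    omega
  classical
  obtain ⟨hp, hpg⟩ := Nat.find_spec hex
  have hpm := fun {k : ℕ} => Nat.find_min hex (m := k)
  generalize Nat.find hex = p at hp hpg hpm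
  have hbad : ∀ e ∈ Ioc (n - p) n, ¬ Good F m C {e} := by
    intro e he hg
    have he' := mem_Ioc.1 he
    refine hpm (k := n - e) (by omega) ⟨by omega, ?_⟩
    rwa [show n - (n - e) = e by omega]
  have hgood : ∀ e, hi < e → e ≤ n - p → Good F m C {e} := fun e he he' =>
    hpg.mono hcl (by omega) (Dom.singleton he') (fun x hx => by rw [mem_singleton] at hx; omega)
  have hpair : ∀ {a b a' b' : ℕ}, hi < a → hi < b → b ≤ n → a ≤ n → a ≠ b → a ≤ a' → b ≤ b' →
      ¬ Good F m C {a, b} → ¬ Good F m C {a', b'} := by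
    intro a b a' b' ha hb hbn han hab haa hbb hng hg
    refine hng (hg.mono hcl (by omega) (Dom.pair haa hbb hab) fun x hx => ?_)
    simp only [mem_insert, mem_singleton] at hx; omega
  have hmq : ∀ q, (m - 1) * q + q = m * q := fun q => by
    obtain ⟨m', rfl⟩ : ∃ m', m = m' + 1 := ⟨m - 1, by omega⟩
    simp [Nat.succ_mul]
  have hm2 := hmq (n - hi + 2)
  rcases Nat.lt_or_ge (2 * c) p with hpc | hpc
  · right
    obtain rfl : p = 2 * c + 1 := by omega
    intro j hj hjm
    -- A bad pair would make `{n - 1, n}` bad, which is one bad tail too many.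
    have hgp : ∀ a b, hi < a → a < b → b ≤ n → Good F m C {a, b} := by
      intro a b ha hab hb
      by_contra hng
      have := hle (by omega) (by omega) hbad {{n - 1, n}} (by
        intro S hS
        rw [mem_singleton] at hS
        subst hS
        refine ⟨card_pair (by omega), fun x hx => ?_,
          hpair ha (by omega) hb (by omega) (by omega) (by omega) (by omega) hng⟩
        simp only [mem_insert, mem_singleton] at hx
        simp only [mem_Ioc]; omega)
      rw [card_singleton] at this
      omega
    -- The `2 (c - j)` bad elements outside the avoided set are consumed in consecutive pairs.
    obtain ⟨r, hr⟩ : ∃ r, r = c - j := ⟨_, rfl⟩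
    obtain ⟨q, hq⟩ : ∃ q, q = n - hi - (2 * c + 1) + r := ⟨_, rfl⟩
    obtain ⟨k, hk⟩ : ∃ k, s - 1 = q + k := ⟨s - 1 - q, by omega⟩
    have hs : s = q + k + 1 := by omega
    have hq2 : (m - 1) * q + (m - 1) ≤ (m - 1) * (n - hi + 2) := by
      rw [← Nat.mul_succ]; exact Nat.mul_le_mul_left _ (by omega)
    have hmq' := hmq q
    have hms : m * s = m * q + m * k + m := by rw [hs]; ring
    obtain ⟨M, hM, hMc, hMd, hMx⟩ := exists_matching_mix (by omega) h0 hCD hDW hWh hDC h1 h2 q k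
      (fun i => if i < r then {n - 2 * c + 2 * j + 1 + 2 * i, n - 2 * c + 2 * j + 2 + 2 * i}
        else {hi + 1 + (i - r)})
      (by
        intro i hi' x hx
        split_ifs at hx with h <;> simp only [mem_insert, mem_singleton] at hx <;> omega)
      (by
        intro i hi' i' hi'' hne
        refine disjoint_left.2 fun x hx hx' => ?_
        split_ifs at hx hx' <;> simp only [mem_insert, mem_singleton] at hx hx' <;> omega)
      (by
        intro i hi'
        split_ifs with h
        · exact hgp _ _ (by omega) (by omega) (by omega)
        · exact hgood _ (by omega) (by omega))
      (Ioc 0 (m - 1 - j)) (Ioc_subset_Ioc_right (by omega))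
      (by rw [Nat.card_Ioc]; omega) (by rw [Nat.card_Ioc]; omega)
    refine ⟨M, hM, by omega, hMd, fun B hB => disjoint_left.2 fun x hx hx' => ?_⟩
    obtain ⟨hxR, hx2⟩ := hMx B hB x hx
    rcases mem_union.1 hx' with h | h
    · exact hxR h
    have h := mem_Ioc.1 h
    rcases hx2 with hx2 | ⟨i, hi', hx2⟩
    · omega
    · split_ifs at hx2 <;> simp only [mem_insert, mem_singleton] at hx2 <;> omega
  · left
    -- With truncated subtraction, `r = 0` when `p ≤ c`: then all `p` bad elements stay uncovered.
    -- Otherwise the first `2 r` bad elements are consumed in nested pairs, leaving `c - r` uncovered.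
    obtain ⟨r, hr⟩ : ∃ r, r = p - c := ⟨_, rfl⟩
    obtain ⟨q, hq⟩ : ∃ q, q = n - hi - p + r := ⟨_, rfl⟩
    obtain ⟨k, hk⟩ : ∃ k, s = q + k := ⟨s - q, by omega⟩
    have hq2 : (m - 1) * q + (m - 1) ≤ (m - 1) * (n - hi + 2) := by
      rw [← Nat.mul_succ]; exact Nat.mul_le_mul_left _ (by omega)
    have hmq' := hmq q
    have hms : m * s = m * q + m * k := by rw [hk]; ring
    obtain ⟨M, hM, hMc, hMd, -⟩ := exists_matching_mix (by omega) h0 hCD hDW hWh hDC h1 h2 q k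
      (fun i => if i < r then {n - p + (i + 1), n - p + (2 * r - i)} else {hi + 1 + (i - r)})
      (by
        intro i hi' x hx
        split_ifs at hx with h <;> simp only [mem_insert, mem_singleton] at hx <;> omega)
      (by
        intro i hi' i' hi'' hne
        refine disjoint_left.2 fun x hx hx' => ?_
        split_ifs at hx hx' <;> simp only [mem_insert, mem_singleton] at hx hx' <;> omega)
      (by
        intro i hi'
        split_ifs with h
        · by_contra hng
          obtain ⟨a, ha⟩ : ∃ a, a = n - p + (i + 1) := ⟨_, rfl⟩
          obtain ⟨b, hb⟩ : ∃ b, b = n - p + (2 * r - i) := ⟨_, rfl⟩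
          rw [← ha, ← hb] at hng
          -- A bad pair `{a, b}` makes `{a + 1, n}` and all `{a, e}` with `b ≤ e ≤ n` bad as well:
          -- at least `2 + c - r` pairs, one too many next to `∅` and `p = c + r` singletons. That
          -- `a + 1 < n` holds uses `2 ≤ c`.
          have := hle (by omega) (by omega) hbad
            (insert {a + 1, n} ((Icc b n).image fun e => {a, e})) (by
              intro S hS
              rcases mem_insert.1 hS with rfl | hS
              · refine ⟨card_pair (by omega), fun x hx => ?_, hpair (by omega) (by omega)
                  (by omega) (by omega) (by omega) (by omega) (by omega) hng⟩
                simp only [mem_insert, mem_singleton] at hx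
                simp only [mem_Ioc]; omega
              · obtain ⟨e, he, rfl⟩ := mem_image.1 hS
                have he := mem_Icc.1 he
                refine ⟨card_pair (by omega), fun x hx => ?_, hpair (by omega) (by omega)
                  (by omega) (by omega) (by omega) (by omega) (by omega) hng⟩
                simp only [mem_insert, mem_singleton] at hx
                simp only [mem_Ioc]; omega)
          rw [card_insert_of_notMem, card_image_of_injOn, Nat.card_Icc] at this
          · omega
          · intro e he e' he' hee
            have he := mem_Icc.1 he
            have : e ∈ ({a, e'} : Finset ℕ) := by
              have hee : ({a, e} : Finset ℕ) = {a, e'} := hee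
              rw [← hee]; simp
            simp only [mem_insert, mem_singleton] at this
            omega
          · intro hmem
            obtain ⟨e, he, hee⟩ := mem_image.1 hmem
            have : a ∈ ({a + 1, n} : Finset ℕ) := by rw [← hee]; simp
            simp only [mem_insert, mem_singleton] at this
            omega
        · exact hgood _ (by omega) (by omega))
      ∅ (empty_subset _) (by rw [card_empty]; omega) (by rw [card_empty]; omega)
    exact ⟨M, hM, by omega, hMd⟩

/-! ### Estimates of binomial coefficients -/

/-- The constant `a` is absorbed because `C(r, m)` has order `n ^ m` when `r ≥ n / (8 m) + m - 1`. -/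
lemma choose_large_layer {n m a r : ℕ} (hm : 1 ≤ m) (h1 : (8 * m) ^ m * (m.factorial * a) ≤ n)
    (h2 : n ≤ 8 * m * (r + 1 - m)) : a * n.choose (m - 1) ≤ r.choose m := by
  have e1 : n.choose (m - 1) ≤ n ^ (m - 1) := Nat.choose_le_pow _ _
  have e2 : (r + 1 - m) ^ m ≤ m.factorial * r.choose m := by
    rw [← Nat.descFactorial_eq_factorial_mul_choose]
    exact Nat.pow_sub_le_descFactorial r m
  have e3 : n ^ m = n * n ^ (m - 1) := by
    rw [← pow_succ', show m - 1 + 1 = m by omega]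
  have hpos : 0 < (8 * m) ^ m * m.factorial := by positivity
  refine Nat.le_of_mul_le_mul_left ?_ hpos
  calc (8 * m) ^ m * m.factorial * (a * n.choose (m - 1))
      = ((8 * m) ^ m * (m.factorial * a)) * n.choose (m - 1) := by ring
    _ ≤ n * n ^ (m - 1) := Nat.mul_le_mul h1 e1
    _ = n ^ m := e3.symm
    _ ≤ (8 * m * (r + 1 - m)) ^ m := Nat.pow_le_pow_left h2 m
    _ = (8 * m) ^ m * (r + 1 - m) ^ m := mul_pow _ _ _
    _ ≤ (8 * m) ^ m * (m.factorial * r.choose m) := Nat.mul_le_mul_left _ e2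
    _ = _ := by ring

lemma choose_le_four_pow {n k t : ℕ} (h : n ≤ 4 * (t + 1 - k)) :
    n.choose k ≤ 4 ^ k * t.choose k := by
  refine Nat.le_of_mul_le_mul_left ?_ k.factorial_pos
  calc k.factorial * n.choose k = n.descFactorial k :=
        (Nat.descFactorial_eq_factorial_mul_choose n k).symm
    _ ≤ n ^ k := Nat.descFactorial_le_pow n k
    _ ≤ (4 * (t + 1 - k)) ^ k := Nat.pow_le_pow_left h k
    _ = 4 ^ k * (t + 1 - k) ^ k := mul_pow _ _ _
    _ ≤ 4 ^ k * t.descFactorial k := Nat.mul_le_mul_left _ (Nat.pow_sub_le_descFactorial t k)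
    _ = _ := by rw [Nat.descFactorial_eq_factorial_mul_choose]; ring

lemma choose_sub_le {n k t : ℕ} (ht : t ≤ n) :
    n.choose (k + 1) ≤ (n - t).choose (k + 1) + t * n ^ k := by
  induction t with
  | zero => simp
  | succ t ih =>
    have h := ih (by omega)
    rw [show n - t = n - (t + 1) + 1 by omega, Nat.choose_succ_succ'] at h
    have h2 : (n - (t + 1)).choose k ≤ n ^ k :=
      (Nat.choose_le_pow _ _).trans (Nat.pow_le_pow_left (by omega) k)
    rw [Nat.succ_mul]; omega

/-! ### The closure under domination -/

open Classical in
/-- The subsets of `[n]` dominated by a non-empty member of `F`. The empty member is left out because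
it would put every subset of `[n]` into the closure, although it occurs at most once in a matching
of `F`. -/
noncomputable def domClosure (n : ℕ) (F : Finset (Finset ℕ)) : Finset (Finset ℕ) :=
  (ground n).powerset.filter fun B => ∃ A ∈ F, A ≠ ∅ ∧ Dom A B

lemma mem_domClosure {n : ℕ} {F : Finset (Finset ℕ)} {B : Finset ℕ} :
    B ∈ domClosure n F ↔ B ⊆ ground n ∧ ∃ A ∈ F, A ≠ ∅ ∧ Dom A B := by
  simp [domClosure]

lemma empty_notMem_domClosure {n : ℕ} {F : Finset (Finset ℕ)} : ∅ ∉ domClosure n F := by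
  rw [mem_domClosure]
  rintro ⟨-, A, -, hA, g, -, hg, -⟩
  obtain ⟨a, ha⟩ := nonempty_iff_ne_empty.2 hA
  exact notMem_empty _ (hg a ha)

lemma domClosure_closed {n : ℕ} {F : Finset (Finset ℕ)} :
    ∀ A ∈ domClosure n F, ∀ B ⊆ ground n, Dom A B → B ∈ domClosure n F := by
  intro A hA B hB h
  obtain ⟨-, E, hE, hE0, hEA⟩ := mem_domClosure.1 hA
  exact mem_domClosure.2 ⟨hB, E, hE, hE0, hEA.trans h⟩

lemma exists_subset_of_mem_domClosure {n : ℕ} {F : Finset (Finset ℕ)} (hF : IsShifted F)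
    {B : Finset ℕ} (hB : B ∈ domClosure n F) : ∃ A ∈ F, A ≠ ∅ ∧ A ⊆ B := by
  obtain ⟨hBg, A, hA, hA0, g, g1, g2, g3⟩ := mem_domClosure.1 hB
  have hsub : A.image g ⊆ B := image_subset_iff.2 g2
  refine ⟨A.image g, hF A hA _ (fun h => ?_) (canShiftTo_image_s18 g1 g3), ?_, hsub⟩
  · have := hBg (hsub h)
    simp [ground] at this
  · simpa using hA0

lemma exists_matching_of_domClosure {n : ℕ} {F : Finset (Finset ℕ)} (hF : IsShifted F)
    {M : Finset (Finset ℕ)} (hM : M ⊆ domClosure n F)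
    (hd : (M : Set (Finset ℕ)).PairwiseDisjoint id) :
    ∃ M' ⊆ F, ∅ ∉ M' ∧ M'.card = M.card ∧ (M' : Set (Finset ℕ)).PairwiseDisjoint id := by
  have hex : ∀ B, ∃ A : Finset ℕ, B ∈ M → A ∈ F ∧ A ≠ ∅ ∧ A ⊆ B := fun B => by
    by_cases hB : B ∈ M
    · obtain ⟨A, hA⟩ := exists_subset_of_mem_domClosure hF (hM hB)
      exact ⟨A, fun _ => hA⟩
    · exact ⟨∅, fun h => absurd h hB⟩
  choose f hf using hex
  refine ⟨M.image f, ?_, ?_, card_image_of_injOn ?_, ?_⟩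
  · exact image_subset_iff.2 fun B hB => (hf B hB).1
  · intro h
    obtain ⟨B, hB, he⟩ := mem_image.1 h
    exact (hf B hB).2.1 he
  · intro B hB B' hB' he
    by_contra hne
    obtain ⟨x, hx⟩ := nonempty_iff_ne_empty.2 (hf B hB).2.1
    exact disjoint_left.1 (hd hB hB' hne) ((hf B hB).2.2 hx) ((hf B' hB').2.2 (he ▸ hx))
  · intro A hA A' hA' hne
    obtain ⟨B, hB, rfl⟩ := mem_image.1 (mem_coe.1 hA)
    obtain ⟨B', hB', rfl⟩ := mem_image.1 (mem_coe.1 hA')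
    have hBB : B ≠ B' := fun h => hne (by rw [h])
    exact (hd hB hB' hBB).mono (hf B hB).2.2 (hf B' hB').2.2

lemma card_missing_domClosure_le {n : ℕ} {F : Finset (Finset ℕ)} :
    ((ground n).powerset \ domClosure n F).card ≤ ((ground n).powerset \ F).card + 1 := by
  refine (card_le_card ?_).trans (card_insert_le ∅ _)
  intro B hB
  obtain ⟨hB, hB'⟩ := mem_sdiff.1 hB
  by_cases h0 : B = ∅
  · simp [h0]
  refine mem_insert_of_mem (mem_sdiff.2 ⟨hB, fun h => hB' ?_⟩)
  exact mem_domClosure.2 ⟨mem_powerset.1 hB, B, h, h0, Dom.of_subset subset_rfl⟩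

/-- With `h` elements of `A` in `[ms-c-1]`, the failure of membership in `Q` leaves at most
`2(m - 1 - h) + 1` elements above, so `j = min c (m - 1 - h)` works. -/
lemma exists_dom_of_notMem_Qfam {m s c : ℕ} (hm : 1 ≤ m) (hs : m + 2 * c ≤ m * s + c) {A : Finset ℕ}
    (hA : A ⊆ ground (m * s + c)) (hQ : A ∉ Qfam m s c) :
    ∃ j ≤ c, j ≤ m - 1 ∧ Dom A (Ioc 0 (m - 1 - j) ∪
      Ioc (m * s + c - 2 * c - 1) (m * s + c - 2 * c - 1 + (2 * j + 1))) := by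
  obtain ⟨w, hw⟩ : ∃ w, w = m * s + c - 2 * c - 1 := ⟨_, rfl⟩
  have hq : A.card + (A ∩ ground w).card < 2 * m := by
    by_contra! h
    refine hQ (mem_filter.2 ⟨mem_powerset.2 hA, ?_⟩)
    rwa [show m * s - c - 1 = w by omega]
  rw [← hw]
  have hAHT : A = (A ∩ ground w) ∪ (A \ ground w) := by
    rw [union_comm]; exact (sdiff_union_inter A _).symm
  have hcard : (A \ ground w).card + (A ∩ ground w).card = A.card := card_sdiff_add_card_inter _ _
  have hT : ∀ x ∈ A \ ground w, w < x := fun x hx => by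
    obtain ⟨h1, h2⟩ := mem_sdiff.1 hx
    have := mem_Icc.1 (hA h1)
    by_contra! h
    exact h2 (mem_Icc.2 (by omega))
  have hTc : (A \ ground w).card ≤ 2 * c + 1 := by
    have : A \ ground w ⊆ Ioc w (m * s + c) := fun x hx => mem_Ioc.2 ⟨hT x hx,
      (mem_Icc.1 (hA (mem_sdiff.1 hx).1)).2⟩
    have := card_le_card this
    rw [Nat.card_Ioc] at this; omega
  have hH : ∀ x ∈ A ∩ ground w, 0 < x := fun x hx => by
    have := mem_Icc.1 (mem_inter.1 hx).2; omega
  refine ⟨min c (m - 1 - (A ∩ ground w).card), by omega, by omega, ?_⟩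
  rw [hAHT]
  refine Dom.union ?_ (Dom.segment (k := 2 * _ + 1) hT ?_) ?_
  · rw [← hAHT]
    simpa using Dom.segment (a := 0)
      (k := m - 1 - min c (m - 1 - (A ∩ ground w).card)) hH (by omega)
  · rw [← hAHT]; omega
  · refine disjoint_left.2 fun x hx hx' => ?_
    have := mem_Ioc.1 hx; have := mem_Ioc.1 hx'; omega

/-! ### The bound on the number of missing sets -/

theorem stmt_18 (m c : ℕ) (hm : 2 ≤ m) (hc : 2 ≤ c) :
    ∃ K s0 : ℕ, ∀ s : ℕ, s0 ≤ s →
      ∀ F : Finset (Finset ℕ), F ⊆ (ground (m * s + c)).powerset →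
        IsShifted F → ¬ HasMatching F s → ¬ F ⊆ Qfam m s c →
          (2 * c + 3) * (m * s + c).choose (m - 1) ≤
            ((ground (m * s + c)).powerset \ F).card + K * s ^ (m - 2) := by
  obtain ⟨N, hN⟩ : ∃ N, N = (2 * c + 3) * 4 ^ (m - 1) := ⟨_, rfl⟩
  obtain ⟨C, hC⟩ : ∃ C, C = m * (N + 2) := ⟨_, rfl⟩
  obtain ⟨B0, hB0⟩ : ∃ B0, B0 = (8 * m) ^ m * (m.factorial * (2 * c + 3)) := ⟨_, rfl⟩
  refine ⟨(2 * c + 3) * ((N + C) * (m + c) ^ (m - 2)) + 1, B0 + 16 * C + 8 * (m * m) + 1, ?_⟩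
  intro s hs F hFg hF hmat hQ
  by_contra! hlt
  obtain ⟨n, hn⟩ : ∃ n, n = m * s + c := ⟨_, rfl⟩
  rw [← hn] at hlt hFg
  have hs1 : 1 ≤ s := by omega
  have hms : 2 * s ≤ m * s := Nat.mul_le_mul_right _ hm
  have hNc : 2 * c + 3 ≤ N := hN ▸ Nat.le_mul_of_pos_right _ (by positivity)
  have hNC : 2 * (N + 2) ≤ C := hC ▸ Nat.mul_le_mul_right _ hm
  have hmC : m ≤ C := hC ▸ Nat.le_mul_of_pos_right _ (by omega)
  have hns : n ≤ (m + c) * s := by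
    rw [hn, add_mul]; exact Nat.add_le_add_left (Nat.le_mul_of_pos_right _ hs1) _
  obtain ⟨r, hr⟩ : ∃ r, r = n / (4 * m) := ⟨_, rfl⟩
  have hr1 : 4 * m * r ≤ n := hr ▸ Nat.mul_div_le n (4 * m)
  have hr2 : n < 4 * m * (r + 1) := by
    rw [hr, mul_comm]; exact Nat.lt_mul_of_div_lt (Nat.lt_succ_self _) (by omega)
  rw [mul_assoc] at hr1 hr2
  have hr3 : 2 * r ≤ m * r := Nat.mul_le_mul_right _ hm
  rw [mul_add, mul_one] at hr2
  have hrm : (m - 1) * r ≤ m * r := Nat.mul_le_mul_right _ (by omega)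
  have hr4 : n ≤ 8 * m * (r + 1 - m) := by
    have hmr : m ≤ r := by
      by_contra! h
      have : m * r ≤ m * m := Nat.mul_le_mul_left _ h.le
      have : m ≤ m * m := Nat.le_mul_self m
      omega
    obtain ⟨r', rfl⟩ : ∃ r', r = m + r' := ⟨r - m, by omega⟩
    rw [show m + r' + 1 - m = r' + 1 by omega, mul_assoc, mul_add, mul_one]
    have : m * (m + r') = m * m + m * r' := mul_add _ _ _
    omega
  set G := domClosure n F
  have hGF : ((ground n).powerset \ G).card ≤ ((ground n).powerset \ F).card + 1 :=
    card_missing_domClosure_le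
  -- Restricting the free part of the counted sets to `(C, n - N]` costs only `O(s ^ (m - 2))`.
  have hmissG : ((ground n).powerset \ G).card < (2 * c + 3) * (n - N - C).choose (m - 1) := by
    have h1 : n.choose (m - 1) ≤ (n - (N + C)).choose (m - 1) + (N + C) * n ^ (m - 2) := by
      have := choose_sub_le (n := n) (k := m - 2) (t := N + C) (by omega)
      rwa [show m - 2 + 1 = m - 1 by omega] at this
    have h2 : n ^ (m - 2) ≤ (m + c) ^ (m - 2) * s ^ (m - 2) := by
      rw [← mul_pow]; exact Nat.pow_le_pow_left hns _
    have h3 : 1 ≤ s ^ (m - 2) := Nat.one_le_pow _ _ hs1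
    have h4 : (2 * c + 3) * n.choose (m - 1) ≤ (2 * c + 3) * (n - (N + C)).choose (m - 1) +
        (2 * c + 3) * ((N + C) * (m + c) ^ (m - 2)) * s ^ (m - 2) := by
      calc (2 * c + 3) * n.choose (m - 1)
          ≤ (2 * c + 3) * ((n - (N + C)).choose (m - 1) +
            (N + C) * ((m + c) ^ (m - 2) * s ^ (m - 2))) :=
            Nat.mul_le_mul_left _ (h1.trans (Nat.add_le_add_left (Nat.mul_le_mul_left _ h2) _))
        _ = _ := by ring
    rw [add_mul, one_mul] at hlt
    rw [Nat.sub_sub]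
    omega
  have hmissn : ((ground n).powerset \ G).card < (2 * c + 3) * n.choose (m - 1) :=
    hmissG.trans_le (Nat.mul_le_mul_left _ (Nat.choose_le_choose _ (by omega)))
  have hcl : ∀ A ∈ G, ∀ B ⊆ ground n, Dom A B → B ∈ G := domClosure_closed
  -- Otherwise all `m`-sets above `n - N - r` are missing: order `n ^ m` of them.
  have h1 : ∀ X ⊆ Ioc 0 (n - N - r), X.card = m → X ∈ G := by
    intro X hX hXc
    by_contra hXG
    have := count_missing (F := G) (lo := n - N - r) (hi := n) (k := m) le_rfl {∅} (by simp) (by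
      intro A hA Y hY hYc hmem
      rw [mem_singleton] at hA
      rw [hA, empty_union] at hmem
      refine hXG (hcl Y hmem X (fun x hx => ?_) (Dom.of_forall_le (by omega) fun a ha b hb => ?_))
      · have := mem_Ioc.1 (hX hx); exact mem_Icc.2 (by omega)
      · have := mem_Ioc.1 (hX hb); have := mem_Ioc.1 (hY ha); omega)
    rw [card_singleton, one_mul] at this
    have h5 : r.choose m ≤ (n - (n - N - r)).choose m := Nat.choose_le_choose _ (by omega)
    have h6 := choose_large_layer (n := n) (m := m) (a := 2 * c + 3) (r := r) (by omega)
      (by omega) hr4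
    omega
  -- Otherwise, for each of the last `N` elements `e`, all `{e} ∪ Y` with `Y ⊆ (n / 2, n - N]` are
  -- missing; each `e` contributes at least `C(n, m - 1) / 4 ^ (m - 1)`, which fixes the choice of `N`.
  have h2 : ∀ X ⊆ Ioc 0 (n / 2), X.card = m - 1 → ∀ y ∈ Ioc (n - N - r) (n - N),
      insert y X ∈ G := by
    intro X hX hXc y hy
    have hy := mem_Ioc.1 hy
    by_contra hXG
    have := count_missing (F := G) (lo := n / 2) (hi := n - N) (k := m - 1) (n := n) (by omega)
      ((Ioc (n - N) n).image fun e => {e}) (by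
        intro A hA
        obtain ⟨e, he, rfl⟩ := mem_image.1 hA
        simpa using he) (by
        intro A hA Y hY hYc hmem
        obtain ⟨e, he, rfl⟩ := mem_image.1 hA
        have he := mem_Ioc.1 he
        refine hXG (hcl _ hmem _ (fun x hx => ?_) ?_)
        · refine mem_Icc.2 ?_
          rcases mem_insert.1 hx with rfl | hx
          · omega
          · have := mem_Ioc.1 (hX hx); omega
        · rw [insert_eq]
          refine (Dom.singleton (by omega)).union
            (Dom.of_forall_le (by omega) fun a ha b hb => ?_) ?_
          · have := mem_Ioc.1 (hX hb); have := mem_Ioc.1 (hY ha); omega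
          · rw [disjoint_singleton_left]
            intro h
            have := mem_Ioc.1 (hX h); omega)
    rw [card_image_of_injective _ singleton_injective, Nat.card_Ioc,
      show n - (n - N) = N by omega] at this
    have h5 : n.choose (m - 1) ≤ 4 ^ (m - 1) * (n - N - n / 2).choose (m - 1) :=
      choose_le_four_pow (by omega)
    have h6 : (2 * c + 3) * n.choose (m - 1) ≤ N * (n - N - n / 2).choose (m - 1) := by
      rw [hN, mul_assoc]; exact Nat.mul_le_mul_left _ (hN ▸ h5)
    omega
  have hcore := core (F := G) (n := n) (m := m) (c := c) (s := s) (C := C) (D := n / 2)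
    (W := n - N - r) (hi := n - N) hm hc hn empty_notMem_domClosure hcl (by omega) (by omega)
    (by omega) (by rw [show n - (n - N) = N by omega, hC]) (by omega) (by omega) (by omega)
    (by rw [show n - N - (n - N - r) = r by omega]; omega) h1 h2 hmissG
  rcases hcore with ⟨M, hM, hMc, hMd⟩ | hcore
  · obtain ⟨M', h1, -, h2, h3⟩ := exists_matching_of_domClosure hF hM hMd
    exact hmat ⟨M', h1, h2.trans hMc, h3⟩
  obtain ⟨A, hA, hAQ⟩ := not_subset.1 hQ
  by_cases hA0 : A = ∅
  · -- The empty set itself extends any matching of size `s - 1` by non-empty members.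
    obtain ⟨M, hM, hMc, hMd, -⟩ := hcore 0 (by omega) (by omega)
    obtain ⟨M', h1, h2, h3, h4⟩ := exists_matching_of_domClosure hF hM hMd
    refine hmat ⟨insert ∅ M', insert_subset (hA0 ▸ hA) h1, ?_, ?_⟩
    · rw [card_insert_of_notMem h2]; omega
    · rw [coe_insert]
      exact h4.insert fun B _ _ => disjoint_empty_left B
  · have hAg : A ⊆ ground n := mem_powerset.1 (hFg hA)
    obtain ⟨j, hj, hjm, hdom⟩ := exists_dom_of_notMem_Qfam (by omega) (by omega) (hn ▸ hAg) hAQ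
    rw [← hn] at hdom
    obtain ⟨M, hM, hMc, hMd, hMx⟩ := hcore j hj hjm
    have hsub : Ioc 0 (m - 1 - j) ∪ Ioc (n - 2 * c - 1) (n - 2 * c - 1 + (2 * j + 1)) ⊆
        ground n := fun x hx => by
      refine mem_Icc.2 ?_
      rcases mem_union.1 hx with hx | hx <;> have := mem_Ioc.1 hx <;> omega
    obtain ⟨a1, a2, a3⟩ := matching_cons empty_notMem_domClosure hM
      (mem_domClosure.2 ⟨hsub, A, hA, hA0, hdom⟩) hMd fun B hB => (hMx B hB).symm
    obtain ⟨M', h1, -, h2, h3⟩ := exists_matching_of_domClosure hF a1 a3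
    exact hmat ⟨M', h1, by omega, h3⟩
end
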